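/- arXiv:1907.05253 — 3 statements merged into one kernel-verified Lean document; each statement's English description precedes it below -/
import Mathlib

section
/- Weak geometric Hardy inequality: under the hypotheses of the foliated geometric Hardy inequality (Ω ⊂ ℝⁿ smooth bounded, u ∈ C^∞(Ω̄), φ ∈ C¹(Ω̄), α ∈ [0, n−1), y ∈ ℝⁿ, u or φ vanishing on ∂Ω), one has (n−1−α)² ∫_Ω |∇u| φ² r_y^{−α} dx ≤ ∫_{Ω∩{|∇u|>0}} |∇u| (4|∇_T φ|² + H² φ²) r_y^{2−α} dx. -/
/-!
Write `w = |∇u|`, `ν = ∇u / |∇u|`, `z = x - y`, `r = |z|` and `k = n - 1 - α > 0`. The inequality is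
the Hardy inequality on the level sets of `u`, integrated over all levels.

Along the foliation, the first variation identity `∫ w (div_T Y - H ⟪Y, ν⟫) = 0` holds for every
compactly supported `C¹` field `Y`: the integrand is the divergence of `w Y - ⟪Y, ν⟫ ∇u`, and the
terms involving tangential derivatives of `w` cancel by symmetry of the Hessian. Since `w` is not
smooth where `∇u = 0`, it is replaced by `√(ε² + |∇u|²)`, and `ε → 0` by dominated convergence
(`integrable_and_integral_varInt`). Taking `Y = ψ² r^(-α) z` and using
`div_T (r^(-α) z) ≥ k r^(-α)`, one gets
`k ∫ w ψ² r^(-α) ≤ -∫ w r^(-α) ψ ⟪2 ∇_T ψ - H ψ ν, z⟫`, and completing the square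
together with `|2 ∇_T ψ - H ψ ν|² = 4 |∇_T ψ|² + H² ψ²` gives the inequality for `ψ`
(`hardy_pointwise`, `hardy_test`).

Three further points make this rigorous without any regularity of `∂Ω`.

* The right-hand integrand is integrable (`integrable_tanTrace`, `integrable_hardyRhs`). The
  divergence of `ζ r^(-α) D²u ν` is, up to integrable terms, `ζ r^(-α) tr (D²u P D²u) / w`, where `P`
  is the projection onto the tangent space, and this dominates `ζ r^(-α) w H² / n`. The integral of
  the divergence is zero, and Fatou's lemma removes the regularization. This is where
  `α + 1 < n` is needed.
* A function vanishing to first order on `∂Ω` extends by zero to a `C¹` function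
  (`contDiff_indicator`). If `φ = 0` on `∂Ω`, take `ψ = φ - δ arctan (φ / δ)` inside `Ω`; if `u = 0`
  on `∂Ω`, take `ψ = u² / (u² + δ²) φ`, whose tangential gradient is `u² / (u² + δ²) ∇_T φ`. In both
  cases the right-hand side for `ψ` is at most that for `φ`, and `δ → 0` (`hardy_of_approx`).
* In the second case `ψ → φ` only where `u ≠ 0`, which suffices since `∇u = 0` almost everywhere on
  `{u = 0}` (`ae_gradient_eq_zero`).
-/

open MeasureTheory
open scoped RealInnerProductSpace

open scoped Classical

noncomputable section

/-- Unit normal `ν = ∇u/|∇u|` to the level sets of `u`. -/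
def levelNormal {n : ℕ} (u : EuclideanSpace ℝ (Fin n) → ℝ)
    (x : EuclideanSpace ℝ (Fin n)) : EuclideanSpace ℝ (Fin n) :=
  ‖gradient u x‖⁻¹ • gradient u x

/-- Tangential gradient `∇_T φ = ∇φ − (∇φ·ν)ν` along the level sets of `u`. -/
def tangGrad {n : ℕ} (u φ : EuclideanSpace ℝ (Fin n) → ℝ)
    (x : EuclideanSpace ℝ (Fin n)) : EuclideanSpace ℝ (Fin n) :=
  gradient φ x - ⟪gradient φ x, levelNormal u x⟫ • levelNormal u x

/-- Mean curvature `H = div ν` of the level sets of `u`. -/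
def meanCurv {n : ℕ} (u : EuclideanSpace ℝ (Fin n) → ℝ)
    (x : EuclideanSpace ℝ (Fin n)) : ℝ :=
  ∑ i : Fin n,
    fderiv ℝ (fun y => levelNormal u y i) x (EuclideanSpace.single i 1)

/-- Radial derivative `u_{r_y} = ∇u · (x−y)/|x−y|`. -/
def radialDeriv {n : ℕ} (u : EuclideanSpace ℝ (Fin n) → ℝ)
    (y x : EuclideanSpace ℝ (Fin n)) : ℝ :=
  ⟪gradient u x, ‖x - y‖⁻¹ • (x - y)⟫

set_option linter.unusedSectionVars false

/-! ### Divergence and regularized gradient -/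

section Regularization

open Filter Topology Module

variable {E : Type*} [NormedAddCommGroup E] [InnerProductSpace ℝ E] [FiniteDimensional ℝ E]

/-- The trace of an endomorphism of a finite-dimensional space, as a continuous linear functional.
Applied to the derivative of a vector field it is the divergence. -/
def trL : (E →L[ℝ] E) →L[ℝ] ℝ :=
  LinearMap.toContinuousLinearMap
    ((LinearMap.trace ℝ E).comp (ContinuousLinearMap.coeLM ℝ))

lemma trL_apply (A : E →L[ℝ] E) : trL A = LinearMap.trace ℝ E (A : E →ₗ[ℝ] E) := rfl

lemma trL_smulRight (f : E →L[ℝ] ℝ) (v : E) : trL (f.smulRight v) = f v := by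
  rw [trL_apply]
  exact LinearMap.trace_smulRight (f : E →ₗ[ℝ] ℝ) v

lemma trL_id : trL (ContinuousLinearMap.id ℝ E) = finrank ℝ E := by
  rw [trL_apply]; exact LinearMap.trace_id ℝ E

lemma trL_eq_sum (A : E →L[ℝ] E) :
    trL A = ∑ i, inner ℝ (stdOrthonormalBasis ℝ E i) (A (stdOrthonormalBasis ℝ E i)) := by
  rw [trL_apply]
  exact LinearMap.trace_eq_sum_inner _ (stdOrthonormalBasis ℝ E)

/-- Divergence theorem for a compactly supported `C¹` vector field. -/
lemma integral_trL_fderiv_eq_zero [MeasurableSpace E] [BorelSpace E] (μ : Measure E)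
    [μ.IsAddHaarMeasure] {X : E → E} (hX : ContDiff ℝ 1 X) (hc : HasCompactSupport X) :
    ∫ x, trL (fderiv ℝ X x) ∂μ = 0 := by
  have hX' : Continuous (fderiv ℝ X) := hX.continuous_fderiv (by simp)
  have hint : ∀ v : E, Integrable (fun x => fderiv ℝ X x v) μ := fun v =>
    (hX'.clm_apply continuous_const).integrable_of_hasCompactSupport
      ((hc.fderiv (𝕜 := ℝ)).comp_left (g := fun A : E →L[ℝ] E => A v) rfl)
  have key : ∀ v : E, ∫ x, fderiv ℝ X x v ∂μ = 0 := by
    intro v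
    have := integral_smul_fderiv_eq_neg_fderiv_smul_of_integrable (μ := μ) (f := fun _ => (1:ℝ))
      (g := X) (v := v) (by simp) (by simpa using hint v)
      (by simpa using hX.continuous.integrable_of_hasCompactSupport hc)
      (fun x _ => differentiableAt_const _) (fun x _ => (hX.differentiable (by simp)) x)
    simpa using this
  simp_rw [trL_eq_sum]
  rw [integral_finsetSum _ (fun i _ => (hint _).const_inner _)]
  refine Finset.sum_eq_zero fun i _ => ?_
  rw [integral_inner (hint _), key, inner_zero_right]

/-- The regularized length `√(ε² + |v|²)`. -/
def rlen (ε : ℝ) (v : E) : ℝ := √(ε ^ 2 + ‖v‖ ^ 2)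

/-- The regularized direction `v / √(ε² + |v|²)`; for `ε = 0` it is `v / |v|`, with value `0` at
`v = 0`. -/
def rdir (ε : ℝ) (v : E) : E := (rlen ε v)⁻¹ • v

end Regularization

section RegularizedGradient

open Filter Topology Module

variable {E : Type*} [NormedAddCommGroup E] [InnerProductSpace ℝ E]

lemma rlen_pos {ε : ℝ} (hε : 0 < ε) (v : E) : 0 < rlen ε v := by
  unfold rlen; positivity

lemma rlen_nonneg (ε : ℝ) (v : E) : 0 ≤ rlen ε v := Real.sqrt_nonneg _

lemma rlen_sq (ε : ℝ) (v : E) : rlen ε v ^ 2 = ε ^ 2 + ‖v‖ ^ 2 :=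
  Real.sq_sqrt (by positivity)

lemma norm_le_rlen (ε : ℝ) (v : E) : ‖v‖ ≤ rlen ε v :=
  Real.le_sqrt_of_sq_le (by nlinarith [sq_nonneg ε])

lemma rlen_le {ε : ℝ} (hε : 0 ≤ ε) (v : E) : rlen ε v ≤ ε + ‖v‖ := by
  apply Real.sqrt_le_iff.2 ⟨by positivity, ?_⟩
  nlinarith [mul_nonneg hε (norm_nonneg v)]

lemma rlen_zero (v : E) : rlen 0 v = ‖v‖ := by simp [rlen]

lemma rlen_smul_rdir (ε : ℝ) (v : E) : rlen ε v • rdir ε v = v := by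
  unfold rdir
  by_cases h : rlen ε v = 0
  · have : ‖v‖ = 0 := le_antisymm (h ▸ norm_le_rlen ε v) (norm_nonneg v)
    simp [norm_eq_zero.1 this]
  · rw [smul_inv_smul₀ h]

lemma norm_rdir_le (ε : ℝ) (v : E) : ‖rdir ε v‖ ≤ 1 := by
  unfold rdir
  rw [norm_smul, norm_inv, Real.norm_of_nonneg (rlen_nonneg ε v), inv_mul_eq_div]
  exact div_le_one_of_le₀ (norm_le_rlen ε v) (rlen_nonneg ε v)

lemma tendsto_rlen (v : E) : Tendsto (fun ε : ℝ => rlen ε v) (𝓝[>] 0) (𝓝 ‖v‖) := by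
  have : Continuous fun ε : ℝ => rlen ε v := by unfold rlen; fun_prop
  have h := (this.tendsto 0).mono_left (nhdsWithin_le_nhds (s := Set.Ioi 0))
  rwa [rlen_zero] at h

lemma tendsto_rdir (v : E) : Tendsto (fun ε : ℝ => rdir ε v) (𝓝[>] 0) (𝓝 (rdir 0 v)) := by
  by_cases hv : v = 0
  · subst hv; simp [rdir]
  · unfold rdir
    rw [rlen_zero]
    exact ((tendsto_rlen v).inv₀ (norm_ne_zero_iff.2 hv)).smul_const v

lemma contDiff_rlen {ε : ℝ} (hε : 0 < ε) {k : ℕ∞} : ContDiff ℝ k (rlen ε : E → ℝ) := by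
  unfold rlen
  exact (contDiff_const.add (contDiff_norm_sq ℝ)).sqrt fun x => by positivity

lemma contDiff_rdir {ε : ℝ} (hε : 0 < ε) {k : ℕ∞} : ContDiff ℝ k (rdir ε : E → E) := by
  unfold rdir
  exact ((contDiff_rlen hε).inv fun x => (rlen_pos hε x).ne').smul contDiff_id

lemma hasFDerivAt_rlen {ε : ℝ} {G : E → E} {M : E →L[ℝ] E} {x : E} (hG : HasFDerivAt G M x)
    (h0 : rlen ε (G x) ≠ 0) :
    HasFDerivAt (fun x => rlen ε (G x)) ((innerSL ℝ (rdir ε (G x))).comp M) x := by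
  have h1 : ε ^ 2 + ‖G x‖ ^ 2 ≠ 0 := by rw [← rlen_sq]; positivity
  have h2 := ((hG.norm_sq).const_add (ε ^ 2)).sqrt h1
  refine h2.congr_fderiv ?_
  ext h
  change (1 / (2 * rlen ε (G x))) * _ = _
  simp [rdir]
  field_simp

lemma hasFDerivAt_rdir {ε : ℝ} {G : E → E} {M : E →L[ℝ] E} {x : E} (hG : HasFDerivAt G M x)
    (h0 : rlen ε (G x) ≠ 0) :
    HasFDerivAt (fun x => rdir ε (G x))
      ((rlen ε (G x))⁻¹ • (M - ((innerSL ℝ (rdir ε (G x))).comp M).smulRight (rdir ε (G x)))) x := by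
  have h1 := ((hasDerivAt_inv h0).comp_hasFDerivAt x (hasFDerivAt_rlen hG h0)).smul hG
  refine h1.congr_fderiv ?_
  ext h
  simp [rdir, smul_sub, smul_smul]
  rw [sub_eq_add_neg, ← neg_smul]
  congr 1
  field_simp
  rw [neg_smul]

variable [FiniteDimensional ℝ E]

/-- The integrand of the first variation identity for the foliation with (regularized) gradient
`v`, Hessian `M`, and the vector field with value `Y` and derivative `D`. For `ε = 0`,
`v ≠ 0` and `ν = v / |v|` it equals `|v| (div_T Y - H ⟪Y, ν⟫)`. -/
def varInt (ε : ℝ) (v : E) (M : E →L[ℝ] E) (Y : E) (D : E →L[ℝ] E) : ℝ :=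
  rlen ε v * trL D - inner ℝ (D v) (rdir ε v) -
    inner ℝ Y (rdir ε v) * (trL M - inner ℝ (rdir ε v) (M (rdir ε v)))

/-- The divergence of `w Y - ⟪Y, ν⟫ ∇u`, where `w` and `ν` are the regularized length and direction
of the gradient; the terms in which the Hessian hits `ν` tangentially cancel by its symmetry. -/
lemma trL_fderiv_tangential {ε : ℝ} (hε : 0 < ε) {G Y : E → E} {M D : E →L[ℝ] E} {x : E}
    (hG : HasFDerivAt G M x) (hM : ∀ a b, inner ℝ (M a) b = inner ℝ a (M b))
    (hY : HasFDerivAt Y D x) :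
    trL (fderiv ℝ (fun x => rlen ε (G x) • Y x - inner ℝ (Y x) (rdir ε (G x)) • G x) x)
      = varInt ε (G x) M (Y x) D := by
  have h0 := (rlen_pos hε (G x)).ne'
  have hw := hasFDerivAt_rlen hG h0
  have hν := hasFDerivAt_rdir hG h0
  have h := (hw.smul hY).sub ((hY.inner ℝ hν).smul hG)
  have e : M (G x) = rlen ε (G x) • M (rdir ε (G x)) := by
    rw [← map_smul, rlen_smul_rdir]
  refine (congrArg trL h.fderiv).trans ?_
  simp only [map_sub, map_add, map_smul, trL_smulRight, varInt,
    ContinuousLinearMap.comp_apply, innerSL_apply_apply, ContinuousLinearMap.prod_apply,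
    fderivInnerCLM_apply, smul_eq_mul, _root_.smul_apply,
    _root_.sub_apply, ContinuousLinearMap.smulRight_apply, e, smul_sub,
    inner_sub_right, inner_smul_right, smul_smul]
  rw [← hM, real_inner_comm (Y x)]
  field_simp
  ring

end RegularizedGradient

/-! ### First variation along the level sets -/

section FirstVariation

open Filter Topology Module

variable {E : Type*} [NormedAddCommGroup E] [InnerProductSpace ℝ E] [FiniteDimensional ℝ E]

lemma abs_inner_rdir_le (ε : ℝ) (a v : E) : |inner ℝ a (rdir ε v)| ≤ ‖a‖ :=
  (abs_real_inner_le_norm _ _).trans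
    (mul_le_of_le_one_right (norm_nonneg _) (norm_rdir_le _ _))

lemma abs_hess_rdir_le (ε : ℝ) (v : E) (M : E →L[ℝ] E) :
    |inner ℝ (rdir ε v) (M (rdir ε v))| ≤ ‖M‖ := by
  rw [real_inner_comm]
  exact (abs_inner_rdir_le _ _ _).trans (M.le_of_opNorm_le_of_le le_rfl (norm_rdir_le _ _) |>.trans
    (by simp))

/-- A bound uniform in the regularization, used for dominated convergence. -/
lemma abs_varInt_le {ε : ℝ} (h0 : 0 ≤ ε) (h1 : ε ≤ 1) (v : E) (M : E →L[ℝ] E) (Y : E)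
    (D : E →L[ℝ] E) :
    |varInt ε v M Y D| ≤ (1 + ‖v‖) * |trL D| + ‖D‖ * ‖v‖ + ‖Y‖ * (|trL M| + ‖M‖) := by
  unfold varInt
  have a1 : |rlen ε v * trL D| ≤ (1 + ‖v‖) * |trL D| := by
    rw [abs_mul, abs_of_nonneg (rlen_nonneg _ _)]
    gcongr
    exact (rlen_le h0 v).trans (by gcongr)
  have a2 : |inner ℝ (D v) (rdir ε v)| ≤ ‖D‖ * ‖v‖ :=
    (abs_inner_rdir_le _ _ _).trans (D.le_opNorm v)
  have a3 : |inner ℝ Y (rdir ε v) * (trL M - inner ℝ (rdir ε v) (M (rdir ε v)))|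
      ≤ ‖Y‖ * (|trL M| + ‖M‖) := by
    rw [abs_mul]
    gcongr
    · exact abs_inner_rdir_le _ _ _
    · exact (abs_sub _ _).trans (by gcongr; exact abs_hess_rdir_le _ _ _)
  exact (abs_sub _ _).trans (add_le_add ((abs_sub _ _).trans (add_le_add a1 a2)) a3)

lemma tendsto_varInt (v : E) (M : E →L[ℝ] E) (Y : E) (D : E →L[ℝ] E) :
    Tendsto (fun ε : ℝ => varInt ε v M Y D) (𝓝[>] 0) (𝓝 (varInt 0 v M Y D)) := by
  have hd := tendsto_rdir v
  have hl : Tendsto (fun ε : ℝ => rlen ε v) (𝓝[>] 0) (𝓝 (rlen 0 v)) := by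
    rw [rlen_zero]; exact tendsto_rlen v
  unfold varInt
  exact ((hl.mul_const _).sub (tendsto_const_nhds.inner hd)).sub ((tendsto_const_nhds.inner hd).mul
    (tendsto_const_nhds.sub (hd.inner ((M.continuous.tendsto _).comp hd))))

variable [MeasurableSpace E] [BorelSpace E]

/-- The first variation identity for a regularized gradient: the integrand is the divergence of a
compactly supported `C¹` field. -/
lemma continuous_and_integral_varInt_pos (μ : Measure E) [μ.IsAddHaarMeasure] {G Y : E → E}
    (hG : ContDiff ℝ 1 G) (hsymm : ∀ x a b, inner ℝ (fderiv ℝ G x a) b = inner ℝ a (fderiv ℝ G x b))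
    (hY : ContDiff ℝ 1 Y) (hc : HasCompactSupport Y) {ε : ℝ} (hε : 0 < ε) :
    Continuous (fun x => varInt ε (G x) (fderiv ℝ G x) (Y x) (fderiv ℝ Y x)) ∧
    ∫ x, varInt ε (G x) (fderiv ℝ G x) (Y x) (fderiv ℝ Y x) ∂μ = 0 := by
  set V : E → E := fun x => rlen ε (G x) • Y x - inner ℝ (Y x) (rdir ε (G x)) • G x with hV
  have e : ∀ x, trL (fderiv ℝ V x) = varInt ε (G x) (fderiv ℝ G x) (Y x) (fderiv ℝ Y x) :=
    fun x => trL_fderiv_tangential hε (hG.differentiable (by simp) x).hasFDerivAt (hsymm x)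
      (hY.differentiable (by simp) x).hasFDerivAt
  have hVd : ContDiff ℝ 1 V :=
    (((contDiff_rlen hε (k := 1)).comp hG).smul hY).sub
      ((hY.inner ℝ ((contDiff_rdir hε (k := 1)).comp hG)).smul hG)
  have hVc : HasCompactSupport V := by
    refine hc.mono fun x hx => ?_
    contrapose hx
    simp only [Function.mem_support, not_not] at hx
    simp [hV, hx]
  constructor
  · simp_rw [← e]
    exact trL.continuous.comp (hVd.continuous_fderiv (by simp))
  · simp_rw [← e]
    exact integral_trL_fderiv_eq_zero μ hVd hVc

/-- First variation of area for the foliation by the level sets, integrated over all levels: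
`∫ |∇u| (div_T Y - H ⟪Y, ν⟫) = 0`. -/
lemma integrable_and_integral_varInt (μ : Measure E) [μ.IsAddHaarMeasure] {G Y : E → E}
    (hG : ContDiff ℝ 1 G) (hsymm : ∀ x a b, inner ℝ (fderiv ℝ G x a) b = inner ℝ a (fderiv ℝ G x b))
    (hY : ContDiff ℝ 1 Y) (hc : HasCompactSupport Y) :
    Integrable (fun x => varInt 0 (G x) (fderiv ℝ G x) (Y x) (fderiv ℝ Y x)) μ ∧
    ∫ x, varInt 0 (G x) (fderiv ℝ G x) (Y x) (fderiv ℝ Y x) ∂μ = 0 := by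
  set B : E → ℝ := fun x => (1 + ‖G x‖) * |trL (fderiv ℝ Y x)| + ‖fderiv ℝ Y x‖ * ‖G x‖ +
    ‖Y x‖ * (|trL (fderiv ℝ G x)| + ‖fderiv ℝ G x‖) with hB
  have cG' := hG.continuous_fderiv (by simp)
  have cY' := hY.continuous_fderiv (by simp)
  have hBi : Integrable B μ := by
    have hBc : Continuous B := by
      have := hG.continuous
      have := hY.continuous
      have := trL.continuous.comp cG'
      have := trL.continuous.comp cY'
      simp only [Function.comp_def] at *
      fun_prop
    refine hBc.integrable_of_hasCompactSupport (HasCompactSupport.intro hc fun x hx => ?_)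
    have h1 : Y x = 0 := image_eq_zero_of_notMem_tsupport hx
    have h2 : fderiv ℝ Y x = 0 := by
      by_contra h
      exact hx (support_fderiv_subset ℝ h)
    simp [hB, h1, h2]
  have hpos : ∀ᶠ ε : ℝ in 𝓝[>] 0, 0 < ε := self_mem_nhdsWithin
  have hle : ∀ᶠ ε : ℝ in 𝓝[>] 0, ε ≤ 1 :=
    nhdsWithin_le_nhds (eventually_le_nhds zero_lt_one)
  have hlim := fun x => tendsto_varInt (G x) (fderiv ℝ G x) (Y x) (fderiv ℝ Y x)
  have hmeas : ∀ᶠ ε : ℝ in 𝓝[>] 0, AEStronglyMeasurable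
      (fun x => varInt ε (G x) (fderiv ℝ G x) (Y x) (fderiv ℝ Y x)) μ := by
    filter_upwards [hpos] with ε hε
    exact (continuous_and_integral_varInt_pos μ hG hsymm hY hc hε).1.aestronglyMeasurable
  have hbd : ∀ᶠ ε : ℝ in 𝓝[>] 0, ∀ᵐ x ∂μ,
      ‖varInt ε (G x) (fderiv ℝ G x) (Y x) (fderiv ℝ Y x)‖ ≤ B x := by
    filter_upwards [hpos, hle] with ε hε hε1
    exact Eventually.of_forall fun x => abs_varInt_le hε.le hε1 _ _ _ _
  constructor
  · refine hBi.mono' ?_ (Eventually.of_forall fun x => abs_varInt_le le_rfl zero_le_one _ _ _ _)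
    have hs : Tendsto (fun k : ℕ => 1 / ((k : ℝ) + 1)) atTop (𝓝[>] 0) :=
      tendsto_nhdsWithin_iff.2 ⟨tendsto_one_div_add_atTop_nhds_zero_nat,
        Eventually.of_forall fun k => by simp only [Set.mem_Ioi]; positivity⟩
    exact aestronglyMeasurable_of_tendsto_ae atTop (fun k : ℕ =>
      (continuous_and_integral_varInt_pos μ hG hsymm hY hc
        (ε := 1 / ((k : ℝ) + 1)) (by positivity)).1.aestronglyMeasurable)
      (Eventually.of_forall fun x => (hlim x).comp hs)
  · have h := tendsto_integral_filter_of_dominated_convergence B hmeas hbd hBi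
      (Eventually.of_forall hlim)
    refine tendsto_nhds_unique h (tendsto_const_nhds.congr' ?_)
    filter_upwards [hpos] with ε hε
    exact (continuous_and_integral_varInt_pos μ hG hsymm hY hc hε).2.symm

end FirstVariation

/-! ### Singular radial weights -/

section Weights

open Filter Topology Module

variable {E : Type*} [NormedAddCommGroup E] [InnerProductSpace ℝ E]

lemma hasFDerivAt_rpow_rlen {δ : ℝ} (hδ : 0 < δ) (p : ℝ) (x y : E) :
    HasFDerivAt (fun x => rlen δ (x - y) ^ p)
      ((p * rlen δ (x - y) ^ (p - 1)) • innerSL ℝ (rdir δ (x - y))) x := by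
  have h := (hasFDerivAt_rlen (ε := δ) ((hasFDerivAt_id x).sub_const y)
    (rlen_pos hδ _).ne').rpow_const (p := p) (Or.inl (rlen_pos hδ _).ne')
  exact h

lemma contDiff_rpow_rlen {δ : ℝ} (hδ : 0 < δ) (p : ℝ) (y : E) :
    ContDiff ℝ 1 (fun x => rlen δ (x - y) ^ p) :=
  ((contDiff_rlen hδ (k := 1)).comp (contDiff_id.sub contDiff_const)).rpow_const_of_ne
    fun _ => (rlen_pos hδ _).ne'

lemma rpow_rlen_le {δ s : ℝ} (hs : 0 ≤ s) {z : E} (hz : z ≠ 0) :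
    rlen δ z ^ (-s) ≤ ‖z‖ ^ (-s) :=
  Real.rpow_le_rpow_of_nonpos (norm_pos_iff.2 hz) (norm_le_rlen δ z) (by linarith)

variable [FiniteDimensional ℝ E] [MeasurableSpace E] [BorelSpace E]

lemma integrableOn_ball_rpow (μ : Measure E) [μ.IsAddHaarMeasure] [Nontrivial E] {s : ℝ}
    (hs : s < finrank ℝ E) (y : E) (R : ℝ) :
    IntegrableOn (fun x => ‖x - y‖ ^ (-s)) (Metric.ball y R) μ := by
  have h1 : IntegrableOn (fun x : E => ‖x‖ ^ (-s)) (Metric.ball 0 R) μ := by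
    refine (integrableOn_fun_norm_addHaar μ (f := fun t : ℝ => t ^ (-s))).2 ?_
    rcases le_or_gt R 0 with hR | hR
    · simp [Set.Ioo_eq_empty_of_le hR]
    · have h2 : IntegrableOn (fun t : ℝ => t ^ ((finrank ℝ E : ℝ) - 1 - s)) (Set.Ioo 0 R) :=
        (intervalIntegral.integrableOn_Ioo_rpow_iff hR).2 (by linarith)
      refine h2.congr_fun (fun t ht => ?_) measurableSet_Ioo
      have hd : ((finrank ℝ E - 1 : ℕ) : ℝ) = (finrank ℝ E : ℝ) - 1 := by
        rw [Nat.cast_sub finrank_pos, Nat.cast_one]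
      simp only [smul_eq_mul]
      rw [← Real.rpow_natCast, hd, ← Real.rpow_add ht.1, sub_eq_add_neg _ s]
  have h3 := (h1.integrable_indicator measurableSet_ball).comp_sub_right y
  rw [← integrable_indicator_iff measurableSet_ball]
  refine h3.congr (Eventually.of_forall fun x => ?_)
  simp only [Set.indicator, Metric.mem_ball, dist_eq_norm, sub_zero]

/-- A singular weight of order below the dimension is integrable against a continuous function of
compact support. -/
lemma integrable_mul_rpow (μ : Measure E) [μ.IsAddHaarMeasure] [Nontrivial E] {s : ℝ}
    (hs : s < finrank ℝ E) (y : E) {c : E → ℝ} (hc : Continuous c) (hcs : HasCompactSupport c) :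
    Integrable (fun x => c x * ‖x - y‖ ^ (-s)) μ := by
  obtain ⟨R, hR⟩ := hcs.isBounded.subset_ball y
  have h := (integrableOn_ball_rpow μ hs y R).integrable_indicator measurableSet_ball
  obtain ⟨C, hC⟩ := hcs.exists_bound_of_continuous hc
  refine (h.bdd_mul (c := C) hc.aestronglyMeasurable (Eventually.of_forall hC)).congr
    (Eventually.of_forall fun x => ?_)
  by_cases hx : x ∈ Metric.ball y R
  · simp [hx]
  · have : c x = 0 := image_eq_zero_of_notMem_tsupport fun h => hx (hR h)
    simp [this]

end Weights

/-! ### Integrability of the curvature term -/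

section CurvatureIntegrability

open Filter Topology Module

variable {E : Type*} [NormedAddCommGroup E] [InnerProductSpace ℝ E] [FiniteDimensional ℝ E]

/-- The trace of the Hessian `M` over the (regularized) tangent space orthogonal to `v`. For `ε = 0`
and `v = ∇u ≠ 0` it equals `|∇u| H`. -/
def tanTrace (ε : ℝ) (v : E) (M : E →L[ℝ] E) : ℝ :=
  trL M - inner ℝ (rdir ε v) (M (rdir ε v))

/-- The Hessian `M` followed by the (regularized) projection orthogonal to `v`: with `v = ∇u`, it is
`rlen ε v` times the derivative of the regularized normal `rdir ε ∇u`. -/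
def tanHess (ε : ℝ) (v : E) (M : E →L[ℝ] E) : E →L[ℝ] E :=
  M - ((innerSL ℝ (rdir ε v)).comp M).smulRight (rdir ε v)

/-- With `ν = rdir ε v` and `P = 1 - ν ⊗ ν`, this is `(tr P M)² ≤ n |P M|² ≤ n tr (M P M)`: the first
step is the Cauchy-Schwarz inequality, the second uses `|ν| ≤ 1`, hence `P² ≤ P`. -/
lemma tanTrace_sq_le (ε : ℝ) (v : E) {M : E →L[ℝ] E}
    (hM : ∀ a b, inner ℝ (M a) b = inner ℝ a (M b)) :
    tanTrace ε v M ^ 2 ≤ finrank ℝ E * trL (M.comp (tanHess ε v M)) := by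
  have h1 : tanTrace ε v M = trL (tanHess ε v M) := by
    simp [tanTrace, tanHess, trL_smulRight]
  rw [h1, trL_eq_sum, trL_eq_sum]
  refine sq_sum_le_card_mul_sum_sq.trans ?_
  simp only [Finset.card_univ, Fintype.card_fin]
  gcongr with i
  set b := stdOrthonormalBasis ℝ E i
  have hb : ‖b‖ = 1 := (stdOrthonormalBasis ℝ E).orthonormal.1 i
  have e1 : inner ℝ b ((M.comp (tanHess ε v M)) b)
      = ‖M b‖ ^ 2 - inner ℝ (rdir ε v) (M b) ^ 2 := by
    rw [ContinuousLinearMap.comp_apply, ← hM]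
    simp [tanHess, inner_sub_right, inner_smul_right]
    rw [real_inner_comm (rdir ε v)]; ring
  have e2 : ‖tanHess ε v M b‖ ^ 2 = ‖M b‖ ^ 2
      - (2 - ‖rdir ε v‖ ^ 2) * inner ℝ (rdir ε v) (M b) ^ 2 := by
    simp [tanHess]
    rw [norm_sub_sq_real, inner_smul_right, norm_smul, mul_pow, Real.norm_eq_abs, sq_abs,
      real_inner_comm (rdir ε v)]
    ring
  rw [e1]
  have h3 : inner ℝ b (tanHess ε v M b) ^ 2 ≤ ‖tanHess ε v M b‖ ^ 2 := by
    have := abs_real_inner_le_norm b (tanHess ε v M b)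
    rw [hb, one_mul] at this
    rw [← sq_abs]
    gcongr
  have h4 : ‖rdir ε v‖ ^ 2 ≤ 1 := pow_le_one₀ (norm_nonneg _) (norm_rdir_le _ _)
  nlinarith [sq_nonneg (inner ℝ (rdir ε v) (M b))]

lemma tendsto_tanTrace (v : E) (M : E →L[ℝ] E) :
    Tendsto (fun ε : ℝ => tanTrace ε v M) (𝓝[>] 0) (𝓝 (tanTrace 0 v M)) := by
  have hd := tendsto_rdir v
  exact tendsto_const_nhds.sub (hd.inner ((M.continuous.tendsto _).comp hd))

/-- The divergence of `η D²u ν`. -/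
lemma trL_fderiv_hess_dir {ε : ℝ} (hε : 0 < ε) {G : E → E} (hG : ContDiff ℝ 2 G) {η : E → ℝ}
    {η' : E →L[ℝ] ℝ} {x : E} (hη : HasFDerivAt η η' x) :
    trL (fderiv ℝ (fun x => η x • fderiv ℝ G x (rdir ε (G x))) x)
      = η' (fderiv ℝ G x (rdir ε (G x))) + η x *
        ((rlen ε (G x))⁻¹ * trL ((fderiv ℝ G x).comp (tanHess ε (G x) (fderiv ℝ G x))) +
          trL ((fderiv ℝ (fderiv ℝ G) x).flip (rdir ε (G x)))) := by
  have h0 := (rlen_pos hε (G x)).ne'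
  have hν := hasFDerivAt_rdir (hG.differentiable (by simp) x).hasFDerivAt h0
  have hDG : ContDiff ℝ 1 (fderiv ℝ G) := hG.fderiv_right (by norm_num)
  have h := hη.smul ((hDG.differentiable (by simp) x).hasFDerivAt.clm_apply hν)
  refine (congrArg trL h.fderiv).trans ?_
  simp only [map_add, map_smul, trL_smulRight, smul_eq_mul, ContinuousLinearMap.comp_smul, tanHess]
  ring

/-- Pointwise domination of the weighted square of the mean curvature by a divergence plus a term
that is bounded uniformly in the regularization. -/
lemma weighted_tanTrace_le {ε : ℝ} (hε : 0 < ε) {G : E → E} (hG : ContDiff ℝ 2 G)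
    (hsymm : ∀ x a b, inner ℝ (fderiv ℝ G x a) b = inner ℝ a (fderiv ℝ G x b))
    {ζ : E → ℝ} (hζ : ContDiff ℝ 1 ζ) (hζ0 : ∀ x, 0 ≤ ζ x) {α : ℝ} (hα : 0 ≤ α) (y x : E)
    (hx : x ≠ y) :
    ζ x * rlen ε (x - y) ^ (-α) * (tanTrace ε (G x) (fderiv ℝ G x) ^ 2 / rlen ε (G x)) ≤
      finrank ℝ E * (trL (fderiv ℝ
        (fun x => (ζ x * rlen ε (x - y) ^ (-α)) • fderiv ℝ G x (rdir ε (G x))) x)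
      + (α * ζ x * ‖fderiv ℝ G x‖ * ‖x - y‖ ^ (-(α + 1)) +
        (‖fderiv ℝ ζ x‖ * ‖fderiv ℝ G x‖ +
          ζ x * (‖trL (E := E)‖ * ‖fderiv ℝ (fderiv ℝ G) x‖)) * ‖x - y‖ ^ (-α))) := by
  have hz : x - y ≠ 0 := sub_ne_zero.2 hx
  have hη := (hζ.differentiable (by simp) x).hasFDerivAt.mul (hasFDerivAt_rpow_rlen hε (-α) x y)
  have hdiv := trL_fderiv_hess_dir hε hG hη
  simp only [Pi.mul_apply] at hdiv
  rw [hdiv]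
  clear hdiv
  set M := fderiv ℝ G x
  set ν := rdir ε (G x)
  set ρ := rlen ε (x - y) with hρ
  have hρ0 : 0 < ρ := rlen_pos hε _
  have hw := rlen_pos hε (G x)
  set w := rlen ε (G x)
  have hr1 : ρ ^ (-α) ≤ ‖x - y‖ ^ (-α) := rpow_rlen_le hα hz
  have hr2 : ρ ^ (-α - 1) ≤ ‖x - y‖ ^ (-(α + 1)) := by
    have := rpow_rlen_le (δ := ε) (s := α + 1) (by linarith) hz
    rwa [show -α - 1 = -(α + 1) by ring]
  have hp1 : 0 ≤ ρ ^ (-α) := by positivity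
  have hp2 : 0 ≤ ρ ^ (-α - 1) := by positivity
  have hMν : ‖M ν‖ ≤ ‖M‖ := (M.le_opNorm ν).trans
    (mul_le_of_le_one_right (norm_nonneg _) (norm_rdir_le _ _))
  have hQ := tanTrace_sq_le ε (G x) (hsymm x)
  have hζx := hζ0 x
  have t1 : -(α * ζ x * ‖M‖ * ‖x - y‖ ^ (-(α + 1))) ≤
      ζ x * ((-α * ρ ^ (-α - 1)) * inner ℝ (rdir ε (x - y)) (M ν)) := by
    have a1 : |inner ℝ (rdir ε (x - y)) (M ν)| ≤ ‖M‖ := by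
      rw [real_inner_comm]; exact (abs_inner_rdir_le _ _ _).trans hMν
    have a2 := (abs_le.1 a1).2
    have : α * ζ x * ρ ^ (-α - 1) * inner ℝ (rdir ε (x - y)) (M ν)
        ≤ α * ζ x * ‖x - y‖ ^ (-(α + 1)) * ‖M‖ := by
      calc _ ≤ α * ζ x * ρ ^ (-α - 1) * ‖M‖ := by gcongr
        _ ≤ _ := by gcongr
    linarith
  have t2 : -(‖fderiv ℝ ζ x‖ * ‖M‖ * ‖x - y‖ ^ (-α)) ≤ ρ ^ (-α) * fderiv ℝ ζ x (M ν) := by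
    have a1 : |fderiv ℝ ζ x (M ν)| ≤ ‖fderiv ℝ ζ x‖ * ‖M‖ :=
      ((fderiv ℝ ζ x).le_opNorm _).trans (by gcongr)
    have a2 := (abs_le.1 a1).1
    have : ρ ^ (-α) * (‖fderiv ℝ ζ x‖ * ‖M‖) ≤ ‖x - y‖ ^ (-α) * (‖fderiv ℝ ζ x‖ * ‖M‖) := by
      gcongr
    nlinarith
  have t3 : -(ζ x * (‖trL (E := E)‖ * ‖fderiv ℝ (fderiv ℝ G) x‖) * ‖x - y‖ ^ (-α)) ≤
      ζ x * ρ ^ (-α) * trL ((fderiv ℝ (fderiv ℝ G) x).flip ν) := by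
    have a1 : |trL ((fderiv ℝ (fderiv ℝ G) x).flip ν)| ≤
        ‖trL (E := E)‖ * ‖fderiv ℝ (fderiv ℝ G) x‖ := by
      refine ((trL (E := E)).le_opNorm _).trans ?_
      gcongr
      refine ((fderiv ℝ (fderiv ℝ G) x).flip.le_opNorm ν).trans ?_
      rw [ContinuousLinearMap.opNorm_flip]
      exact mul_le_of_le_one_right (norm_nonneg (fderiv ℝ (fderiv ℝ G) x)) (norm_rdir_le _ _)
    have a2 := (abs_le.1 a1).1
    have : ζ x * ρ ^ (-α) * (‖trL (E := E)‖ * ‖fderiv ℝ (fderiv ℝ G) x‖) ≤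
        ζ x * ‖x - y‖ ^ (-α) * (‖trL (E := E)‖ * ‖fderiv ℝ (fderiv ℝ G) x‖) := by
      gcongr
    nlinarith [mul_nonneg hζx hp1]
  have t4 : ζ x * ρ ^ (-α) * (tanTrace ε (G x) M ^ 2 / w) ≤
      finrank ℝ E * (ζ x * ρ ^ (-α) * (w⁻¹ * trL (M.comp (tanHess ε (G x) M)))) := by
    calc _ ≤ ζ x * ρ ^ (-α) * ((finrank ℝ E * trL (M.comp (tanHess ε (G x) M))) / w) := by gcongr
      _ = _ := by ring
  refine t4.trans ?_
  gcongr
  simp only [_root_.add_apply, _root_.smul_apply, innerSL_apply_apply, smul_eq_mul, neg_mul,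
    mul_neg] at *
  linarith

end CurvatureIntegrability

section CurvatureIntegrabilityLimit

open Filter Topology Module

variable {E : Type*} [NormedAddCommGroup E] [InnerProductSpace ℝ E] [FiniteDimensional ℝ E]
  [MeasurableSpace E] [BorelSpace E]

lemma tendsto_one_div_nat_nhdsGT :
    Tendsto (fun k : ℕ => 1 / ((k : ℝ) + 1)) atTop (𝓝[>] 0) :=
  tendsto_nhdsWithin_iff.2 ⟨tendsto_one_div_add_atTop_nhds_zero_nat,
    Eventually.of_forall fun k => by simp only [Set.mem_Ioi]; positivity⟩

lemma continuous_tanTrace {ε : ℝ} (hε : 0 < ε) {G : E → E} (hG : ContDiff ℝ 1 G) :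
    Continuous fun x => tanTrace ε (G x) (fderiv ℝ G x) := by
  have h1 := hG.continuous_fderiv (by simp)
  have h2 : Continuous fun x => rdir ε (G x) :=
    (contDiff_rdir hε (k := 1)).continuous.comp hG.continuous
  exact (trL.continuous.comp h1).sub (h2.inner (h1.clm_apply h2))

lemma measurable_tanTrace {G : E → E} (hG : ContDiff ℝ 1 G) :
    Measurable fun x => tanTrace 0 (G x) (fderiv ℝ G x) :=
  measurable_of_tendsto_metrizable (fun k : ℕ =>
      (continuous_tanTrace (ε := 1 / ((k : ℝ) + 1)) (by positivity) hG).measurable)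
    (tendsto_pi_nhds.2 fun _ => (tendsto_tanTrace _ _).comp tendsto_one_div_nat_nhdsGT)

/-- `∫ ζ |∇u| H² |x - y|^(-α) < ∞`: the integrand is dominated by the divergence of
`ζ ρ^(-α) D²u ν` up to integrable terms, uniformly in the regularization. -/
lemma integrable_tanTrace (μ : Measure E) [μ.IsAddHaarMeasure] {G : E → E} (hG : ContDiff ℝ 2 G)
    (hsymm : ∀ x a b, inner ℝ (fderiv ℝ G x a) b = inner ℝ a (fderiv ℝ G x b))
    {ζ : E → ℝ} (hζ : ContDiff ℝ 1 ζ) (hζ0 : ∀ x, 0 ≤ ζ x) (hζc : HasCompactSupport ζ)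
    {α : ℝ} (hα : 0 ≤ α) (hα1 : α < finrank ℝ E - 1) (y : E) :
    Integrable (fun x => ζ x * ‖x - y‖ ^ (-α) *
      (tanTrace 0 (G x) (fderiv ℝ G x) ^ 2 / ‖G x‖)) μ := by
  have : Nontrivial E := Module.nontrivial_of_finrank_pos (R := ℝ) (by
    have : (0:ℝ) < finrank ℝ E := by linarith
    exact_mod_cast this)
  have hG1 : ContDiff ℝ 1 G := hG.of_le (by norm_num)
  have hDG : ContDiff ℝ 1 (fderiv ℝ G) := hG.fderiv_right (by norm_num)
  have cDG := hDG.continuous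
  have cDDG := hDG.continuous_fderiv (by simp)
  have cζ := hζ.continuous
  have cDζ := hζ.continuous_fderiv (by simp)
  have hy : ∀ᵐ x ∂μ, x ≠ y := by simp [ae_iff]
  set B : E → ℝ := fun x => α * ζ x * ‖fderiv ℝ G x‖ * ‖x - y‖ ^ (-(α + 1)) +
        (‖fderiv ℝ ζ x‖ * ‖fderiv ℝ G x‖ +
          ζ x * (‖trL (E := E)‖ * ‖fderiv ℝ (fderiv ℝ G) x‖)) * ‖x - y‖ ^ (-α) with hB
  have z1 : ∀ x ∉ tsupport ζ, ζ x = 0 := fun x hx => image_eq_zero_of_notMem_tsupport hx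
  have z2 : ∀ x ∉ tsupport ζ, fderiv ℝ ζ x = 0 := fun x hx => by
    by_contra h
    exact hx (support_fderiv_subset ℝ h)
  have hBi : Integrable B μ := by
    refine (integrable_mul_rpow μ (by linarith) y (by fun_prop) ?_).add
      (integrable_mul_rpow μ (by linarith) y
        ((cDζ.norm.mul cDG.norm).add (cζ.mul (continuous_const.mul cDDG.norm))) ?_)
    · exact HasCompactSupport.intro hζc fun x hx => by simp [z1 x hx]
    · exact HasCompactSupport.intro hζc fun x hx => by simp [z1 x hx, z2 x hx]
  set F : ℝ → E → ℝ := fun ε x => ζ x * rlen ε (x - y) ^ (-α) *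
    (tanTrace ε (G x) (fderiv ℝ G x) ^ 2 / rlen ε (G x)) with hF
  have hF0 : ∀ ε x, 0 ≤ F ε x := fun ε x => by
    have := hζ0 x
    have := rlen_nonneg ε (x - y)
    have := rlen_nonneg ε (G x)
    positivity
  have hFc : ∀ ε, 0 < ε → Continuous (F ε) := fun ε hε =>
    (cζ.mul (contDiff_rpow_rlen hε _ y).continuous).mul
      (((continuous_tanTrace hε hG1).pow 2).div
        ((contDiff_rlen hε (k := 1)).continuous.comp hG1.continuous) fun x => (rlen_pos hε _).ne')
  have hFint : ∀ ε, 0 < ε → ∫ x, F ε x ∂μ ≤ finrank ℝ E * ∫ x, B x ∂μ := by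
    intro ε hε
    set X : E → E := fun x => (ζ x * rlen ε (x - y) ^ (-α)) • fderiv ℝ G x (rdir ε (G x)) with hX
    have hXd : ContDiff ℝ 1 X := (hζ.mul (contDiff_rpow_rlen hε _ y)).smul
      (hDG.clm_apply ((contDiff_rdir hε (k := 1)).comp hG1))
    have hXc : HasCompactSupport X :=
      HasCompactSupport.intro hζc fun x hx => by simp [hX, z1 x hx]
    have hXi : Integrable (fun x => trL (fderiv ℝ X x)) μ :=
      (trL.continuous.comp (hXd.continuous_fderiv (by simp))).integrable_of_hasCompactSupport
        ((hXc.fderiv (𝕜 := ℝ)).comp_left (map_zero _))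
    have h1 : ∫ x, F ε x ∂μ ≤ ∫ x, finrank ℝ E * (trL (fderiv ℝ X x) + B x) ∂μ := by
      refine integral_mono_ae ((hFc ε hε).integrable_of_hasCompactSupport
        (HasCompactSupport.intro hζc fun x hx => by simp [hF, z1 x hx]))
        ((hXi.add hBi).const_mul _) ?_
      filter_upwards [hy] with x hx
      exact weighted_tanTrace_le hε hG hsymm hζ hζ0 hα y x hx
    rwa [integral_const_mul, integral_add hXi hBi, integral_trL_fderiv_eq_zero μ hXd hXc,
      zero_add] at h1
  have hmeas : Measurable fun x => ζ x * ‖x - y‖ ^ (-α) *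
      (tanTrace 0 (G x) (fderiv ℝ G x) ^ 2 / ‖G x‖) := by
    have h1 := cζ.measurable
    have h2 := (measurable_tanTrace hG1)
    have h3 := hG1.continuous.measurable
    fun_prop
  refine ⟨hmeas.aestronglyMeasurable, ?_⟩
  set e : ℕ → ℝ := fun k => 1 / ((k : ℝ) + 1)
  have he : ∀ k, 0 < e k := fun k => by positivity
  rw [hasFiniteIntegral_iff_ofReal (Eventually.of_forall fun x => by
    have := hζ0 x
    positivity)]
  -- Fatou's lemma; where `G x = 0` the limiting integrand is `0` because of division by zero.
  have h1 : ∫⁻ x, ENNReal.ofReal (ζ x * ‖x - y‖ ^ (-α) *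
      (tanTrace 0 (G x) (fderiv ℝ G x) ^ 2 / ‖G x‖)) ∂μ ≤
      ∫⁻ x, liminf (fun k => ENNReal.ofReal (F (e k) x)) atTop ∂μ := by
    refine lintegral_mono_ae ?_
    filter_upwards [hy] with x hx
    by_cases hGx : G x = 0
    · simp [hGx]
    · refine (Tendsto.liminf_eq ?_).ge
      refine ENNReal.tendsto_ofReal ?_
      have a1 : Tendsto (fun ε : ℝ => F ε x) (𝓝[>] 0) (𝓝 (ζ x * ‖x - y‖ ^ (-α) *
          (tanTrace 0 (G x) (fderiv ℝ G x) ^ 2 / ‖G x‖))) :=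
        (((tendsto_rlen (x - y)).rpow_const
          (Or.inl (norm_ne_zero_iff.2 (sub_ne_zero.2 hx)))).const_mul _).mul
          (((tendsto_tanTrace _ _).pow 2).div (tendsto_rlen _) (norm_ne_zero_iff.2 hGx))
      exact a1.comp tendsto_one_div_nat_nhdsGT
  refine (h1.trans (lintegral_liminf_le fun k =>
    (hFc _ (he k)).measurable.ennreal_ofReal)).trans_lt ?_
  refine lt_of_le_of_lt (b := ENNReal.ofReal (finrank ℝ E * ∫ x, B x ∂μ)) ?_ ENNReal.ofReal_lt_top
  refine liminf_le_of_le (by isBoundedDefault) fun b hb => ?_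
  obtain ⟨k, hk⟩ := hb.exists
  refine hk.trans ?_
  rw [← ofReal_integral_eq_lintegral_ofReal ((hFc _ (he k)).integrable_of_hasCompactSupport
    (HasCompactSupport.intro hζc fun x hx => by simp [hF, z1 x hx]))
    (Eventually.of_forall (hF0 _))]
  exact ENNReal.ofReal_le_ofReal (hFint _ (he k))

end CurvatureIntegrabilityLimit

/-! ### The inequality for compactly supported test functions -/

section TestFunctions

open Filter Topology Module

variable {E : Type*} [NormedAddCommGroup E] [InnerProductSpace ℝ E] [FiniteDimensional ℝ E]

lemma norm_rdir_zero {v : E} (hv : v ≠ 0) : ‖rdir 0 v‖ = 1 := by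
  unfold rdir
  rw [rlen_zero, norm_smul, norm_inv, norm_norm, inv_mul_cancel₀ (norm_ne_zero_iff.2 hv)]

/-- The pointwise form of the Hardy inequality for the field `ψ² ρ^(-α) z`. It combines
`div_T (ρ^(-α) z) ≥ (n - 1 - α) ρ^(-α)` with the inequality of arithmetic and geometric means,
applied to the vector `2 ∇_T ψ - H ψ ν`, whose two components are orthogonal. -/
lemma hardy_pointwise {δ : ℝ} (hδ : 0 < δ) {α : ℝ} (hα : 0 ≤ α) (hα1 : α < finrank ℝ E - 1)
    (v z g : E) (M : E →L[ℝ] E) (p : ℝ) :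
    ((finrank ℝ E : ℝ) - 1 - α) ^ 2 * (‖v‖ * p ^ 2 * rlen δ z ^ (-α)) ≤
      rlen δ z ^ (-α) * (‖z‖ ^ 2 * (4 * (‖v‖ * ‖g - inner ℝ g (rdir 0 v) • rdir 0 v‖ ^ 2) +
        tanTrace 0 v M ^ 2 / ‖v‖ * p ^ 2)) +
      2 * ((finrank ℝ E : ℝ) - 1 - α) * varInt 0 v M ((p ^ 2 * rlen δ z ^ (-α)) • z)
        ((p ^ 2 * rlen δ z ^ (-α)) • ContinuousLinearMap.id ℝ E +
          (p ^ 2 • (-α * rlen δ z ^ (-α - 1)) • innerSL ℝ (rdir δ z) +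
            rlen δ z ^ (-α) • (2 * p) • innerSL ℝ g).smulRight z) := by
  by_cases hv : v = 0
  · subst hv
    simp [varInt, rlen_zero, rdir]
  set k := (finrank ℝ E : ℝ) - 1 - α with hk
  have hk0 : 0 < k := by linarith
  have hw : 0 < ‖v‖ := norm_pos_iff.2 hv
  have hν := norm_rdir_zero hv
  have hvν : v = ‖v‖ • rdir 0 v := by
    conv_lhs => rw [← rlen_smul_rdir 0 v, rlen_zero]
  set ν := rdir 0 v with hνd
  set w := ‖v‖
  set ρ := rlen δ z
  have hρ : 0 < ρ := rlen_pos hδ z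
  set σ := rdir δ z with hσd
  have hσ : ‖σ‖ ≤ 1 := norm_rdir_le δ z
  have hz : z = ρ • σ := (rlen_smul_rdir δ z).symm
  have hr : ρ ^ (-α - 1) * ρ = ρ ^ (-α) := by
    rw [Real.rpow_sub_one hρ.ne', div_mul_cancel₀ _ hρ.ne']
  have hr0 : 0 < ρ ^ (-α) := by positivity
  set r := ρ ^ (-α)
  set r' := ρ ^ (-α - 1)
  set T := g - inner ℝ g ν • ν with hT
  set τ := tanTrace 0 v M with hτ
  have hνν : inner ℝ ν ν = (1 : ℝ) := by rw [real_inner_self_eq_norm_sq, hν]; norm_num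
  have hTν : inner ℝ T ν = (0 : ℝ) := by
    rw [hT, inner_sub_left, inner_smul_left, hνν]; simp
  have hTz : inner ℝ g z - inner ℝ g ν * inner ℝ z ν = inner ℝ T z := by
    simp [hT, inner_sub_left, inner_smul_left, real_inner_comm]
  have hσσ : inner ℝ σ z - inner ℝ σ ν * inner ℝ z ν ≤ ρ := by
    rw [hz]
    simp only [inner_smul_right, inner_smul_left, real_inner_self_eq_norm_sq]
    simp only [conj_trivial]
    have : ‖σ‖ ^ 2 ≤ 1 := pow_le_one₀ (norm_nonneg _) hσ
    nlinarith [mul_nonneg hρ.le (sq_nonneg (inner ℝ σ ν)), mul_le_mul_of_nonneg_left this hρ.le]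
  have hvar : varInt 0 v M ((p ^ 2 * r) • z)
        ((p ^ 2 * r) • ContinuousLinearMap.id ℝ E +
          (p ^ 2 • (-α * r') • innerSL ℝ σ + r • (2 * p) • innerSL ℝ g).smulRight z) =
      w * (p ^ 2 * r * (finrank ℝ E - 1) + 2 * p * r * inner ℝ T z
        - α * p ^ 2 * r' * (inner ℝ σ z - inner ℝ σ ν * inner ℝ z ν))
        - p ^ 2 * r * inner ℝ z ν * τ := by
    have e1 : τ = trL M - inner ℝ ν (M ν) := rfl
    rw [← hTz, e1]
    unfold varInt
    rw [rlen_zero, ← hνd]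
    simp only [map_add, map_smul, trL_id, trL_smulRight, _root_.add_apply, _root_.smul_apply,
      innerSL_apply_apply, smul_eq_mul, ContinuousLinearMap.smulRight_apply,
      ContinuousLinearMap.id_apply, inner_add_left, inner_smul_left, conj_trivial]
    have e2 : inner ℝ v ν = w := by
      conv_lhs => rw [hvν]
      rw [inner_smul_left, hνν]; simp
    have e3 : ∀ a : E, inner ℝ a v = w * inner ℝ a ν := fun a => by
      conv_lhs => rw [hvν]
      rw [inner_smul_right]
    rw [e2, e3 σ, e3 g]
    ring
  rw [hvar]
  -- `|σ| ≤ 1`, so the tangential part of the derivative of the weight costs at most `α`.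
  have hlow : w * (p ^ 2 * r * k + 2 * p * r * inner ℝ T z) - p ^ 2 * r * inner ℝ z ν * τ ≤
      w * (p ^ 2 * r * (finrank ℝ E - 1) + 2 * p * r * inner ℝ T z
        - α * p ^ 2 * r' * (inner ℝ σ z - inner ℝ σ ν * inner ℝ z ν))
        - p ^ 2 * r * inner ℝ z ν * τ := by
    have : α * p ^ 2 * r' * (inner ℝ σ z - inner ℝ σ ν * inner ℝ z ν) ≤ α * p ^ 2 * r := by
      rw [← hr, ← mul_assoc]
      gcongr
    have : p ^ 2 * r * k = p ^ 2 * r * (finrank ℝ E - 1) - α * p ^ 2 * r := by rw [hk]; ring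
    gcongr w * ?_ - _
    linarith
  -- `Q = 2 ∇_T ψ - H ψ ν`; the sum of squares `(k p + ⟪Q, z⟫)² ≥ 0` gives the claim.
  set Q := (2 : ℝ) • T - (p * (τ / w)) • ν with hQ
  have hQ2 : ‖Q‖ ^ 2 = 4 * ‖T‖ ^ 2 + p ^ 2 * (τ / w) ^ 2 := by
    rw [hQ, norm_sub_sq_real, inner_smul_left, inner_smul_right, hTν, norm_smul, norm_smul, hν,
      mul_pow, mul_pow]
    simp only [Real.norm_eq_abs, sq_abs]
    simp
    ring
  have hQz : inner ℝ Q z = 2 * inner ℝ T z - p * (τ / w) * inner ℝ z ν := by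
    rw [hQ, inner_sub_left, inner_smul_left, inner_smul_left, real_inner_comm z ν]
    simp
  have hCS : (inner ℝ Q z) ^ 2 ≤ ‖Q‖ ^ 2 * ‖z‖ ^ 2 := by
    rw [← mul_pow, ← sq_abs]
    gcongr
    exact abs_real_inner_le_norm Q z
  have hmain : 0 ≤ ‖z‖ ^ 2 * (4 * ‖T‖ ^ 2 + p ^ 2 * (τ / w) ^ 2) + k ^ 2 * p ^ 2 +
      2 * k * p * (2 * inner ℝ T z - p * (τ / w) * inner ℝ z ν) := by
    rw [← hQ2, ← hQz]
    nlinarith [sq_nonneg (k * p + inner ℝ Q z)]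
  have hmain2 := mul_nonneg (mul_nonneg hw.le hr0.le) hmain
  have hfin : w * r * (‖z‖ ^ 2 * (4 * ‖T‖ ^ 2 + p ^ 2 * (τ / w) ^ 2) + k ^ 2 * p ^ 2 +
      2 * k * p * (2 * inner ℝ T z - p * (τ / w) * inner ℝ z ν)) =
      r * (‖z‖ ^ 2 * (4 * (w * ‖T‖ ^ 2) + τ ^ 2 / w * p ^ 2)) +
      2 * k * (w * (p ^ 2 * r * k + 2 * p * r * inner ℝ T z) - p ^ 2 * r * inner ℝ z ν * τ) -
      k ^ 2 * (w * p ^ 2 * r) := by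
    field_simp
    ring
  rw [hfin] at hmain2
  have := mul_le_mul_of_nonneg_left hlow (by positivity : 0 ≤ 2 * k)
  linarith

variable [MeasurableSpace E] [BorelSpace E]

/-- The Hardy inequality for a compactly supported test function, with regularized weight on the
left and an arbitrary integrable majorant `R` of the right-hand integrand. -/
lemma hardy_test (μ : Measure E) [μ.IsAddHaarMeasure] {G : E → E} (hG : ContDiff ℝ 1 G)
    (hsymm : ∀ x a b, inner ℝ (fderiv ℝ G x a) b = inner ℝ a (fderiv ℝ G x b))
    {ψ : E → ℝ} (hψ : ContDiff ℝ 1 ψ) (hψc : HasCompactSupport ψ)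
    {α : ℝ} (hα : 0 ≤ α) (hα1 : α < finrank ℝ E - 1) (y : E) {R : E → ℝ} (hR : Integrable R μ)
    (hle : ∀ᵐ x ∂μ, ‖x - y‖ ^ (-α) * (‖x - y‖ ^ 2 *
      (4 * (‖G x‖ * ‖gradient ψ x - inner ℝ (gradient ψ x) (rdir 0 (G x)) • rdir 0 (G x)‖ ^ 2) +
        tanTrace 0 (G x) (fderiv ℝ G x) ^ 2 / ‖G x‖ * ψ x ^ 2)) ≤ R x)
    {δ : ℝ} (hδ : 0 < δ) :
    ((finrank ℝ E : ℝ) - 1 - α) ^ 2 * ∫ x, ‖G x‖ * ψ x ^ 2 * rlen δ (x - y) ^ (-α) ∂μ ≤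
      ∫ x, R x ∂μ := by
  have : Nontrivial E := Module.nontrivial_of_finrank_pos (R := ℝ) (by
    have : (0:ℝ) < finrank ℝ E := by linarith
    exact_mod_cast this)
  have hy : ∀ᵐ x ∂μ, x ≠ y := by simp [ae_iff]
  set Y : E → E := fun x => (ψ x ^ 2 * rlen δ (x - y) ^ (-α)) • (x - y) with hY
  have hYd : ContDiff ℝ 1 Y :=
    ((hψ.pow 2).mul (contDiff_rpow_rlen hδ _ y)).smul (contDiff_id.sub contDiff_const)
  have hYc : HasCompactSupport Y := HasCompactSupport.intro hψc fun x hx => by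
    simp [hY, image_eq_zero_of_notMem_tsupport hx]
  obtain ⟨hi, h0⟩ := integrable_and_integral_varInt μ hG hsymm hYd hYc
  have hD : ∀ x, fderiv ℝ Y x = (ψ x ^ 2 * rlen δ (x - y) ^ (-α)) • ContinuousLinearMap.id ℝ E +
          (ψ x ^ 2 • (-α * rlen δ (x - y) ^ (-α - 1)) • innerSL ℝ (rdir δ (x - y)) +
            rlen δ (x - y) ^ (-α) • (2 * ψ x) • innerSL ℝ (gradient ψ x)).smulRight (x - y) := by
    intro x
    have d1 : HasFDerivAt ψ (innerSL ℝ (gradient ψ x)) x :=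
      (hψ.differentiable (by simp) x).hasGradientAt.hasFDerivAt
    have d2 := d1.pow 2
    simp only [Nat.add_one_sub_one, pow_one, Nat.cast_ofNat, nsmul_eq_mul] at d2
    exact ((d2.mul (hasFDerivAt_rpow_rlen hδ (-α) x y)).smul
      ((hasFDerivAt_id x).sub_const y)).fderiv
  rw [← integral_const_mul]
  calc _ ≤ ∫ x, (R x + 2 * ((finrank ℝ E : ℝ) - 1 - α) *
        varInt 0 (G x) (fderiv ℝ G x) (Y x) (fderiv ℝ Y x)) ∂μ := by
        refine integral_mono_ae ?_ (hR.add (hi.const_mul _)) ?_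
        · refine Continuous.integrable_of_hasCompactSupport ?_ (HasCompactSupport.intro hψc
            fun x hx => by simp [image_eq_zero_of_notMem_tsupport hx])
          exact continuous_const.mul ((hG.continuous.norm.mul (hψ.continuous.pow 2)).mul
            (contDiff_rpow_rlen hδ _ y).continuous)
        · filter_upwards [hy, hle] with x hx hRx
          rw [hD x]
          refine (hardy_pointwise hδ hα hα1 (G x) (x - y) (gradient ψ x) (fderiv ℝ G x)
            (ψ x)).trans ?_
          gcongr
          refine le_trans ?_ hRx
          exact mul_le_mul_of_nonneg_right (rpow_rlen_le hα (sub_ne_zero.2 hx)) (by positivity)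
    _ = ∫ x, R x ∂μ := by
        rw [integral_add hR (hi.const_mul _), integral_const_mul, h0, mul_zero, add_zero]

end TestFunctions

/-! ### Extension by zero, cutoffs, and critical points on a level set -/

section Cutoffs

open Filter Topology Module

variable {E : Type*} [NormedAddCommGroup E] [InnerProductSpace ℝ E] [FiniteDimensional ℝ E]

/-- Extension by zero of a function vanishing to first order on the boundary. -/
lemma hasFDerivAt_indicator {Ω : Set E} (hΩ : IsOpen Ω) {F : E → ℝ} (hF : ContDiff ℝ 1 F)
    (h0 : ∀ x ∈ frontier Ω, F x = 0) (h1 : ∀ x ∈ frontier Ω, fderiv ℝ F x = 0) (x : E) :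
    HasFDerivAt (Ω.indicator F) (Ω.indicator (fderiv ℝ F) x) x := by
  have hd := (hF.differentiable (by simp) x).hasFDerivAt
  by_cases hx : x ∈ Ω
  · rw [Set.indicator_of_mem hx]
    refine hd.congr_of_eventuallyEq ?_
    filter_upwards [hΩ.mem_nhds hx] with z hz using Set.indicator_of_mem hz F
  rw [Set.indicator_of_notMem hx]
  by_cases hc : x ∈ closure Ω
  · have hfr : x ∈ frontier Ω := by
      rw [hΩ.frontier_eq]; exact ⟨hc, hx⟩
    rw [h1 x hfr] at hd
    rw [hasFDerivAt_iff_isLittleO] at hd ⊢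
    refine Asymptotics.IsLittleO.of_bound fun c hc => ?_
    filter_upwards [hd.bound hc] with z hz
    rw [Set.indicator_of_notMem hx]
    by_cases hzΩ : z ∈ Ω
    · simpa [Set.indicator_of_mem hzΩ, h0 x hfr] using hz
    · simp only [Set.indicator_of_notMem hzΩ, _root_.zero_apply, sub_zero, norm_zero]
      positivity
  · refine (hasFDerivAt_const (0 : ℝ) x).congr_of_eventuallyEq ?_
    filter_upwards [isClosed_closure.isOpen_compl.mem_nhds hc] with z hz
    exact Set.indicator_of_notMem (fun h => hz (subset_closure h)) F

/-- The derivative is the extension by zero of a continuous map vanishing on the boundary. -/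
lemma contDiff_indicator {Ω : Set E} (hΩ : IsOpen Ω) {F : E → ℝ} (hF : ContDiff ℝ 1 F)
    (h0 : ∀ x ∈ frontier Ω, F x = 0) (h1 : ∀ x ∈ frontier Ω, fderiv ℝ F x = 0) :
    ContDiff ℝ 1 (Ω.indicator F) := by
  have hd := hasFDerivAt_indicator hΩ hF h0 h1
  rw [contDiff_one_iff_fderiv]
  refine ⟨fun x => (hd x).differentiableAt, ?_⟩
  rw [funext fun x => (hd x).fderiv]
  exact continuous_indicator h1 (hF.continuous_fderiv (by simp)).continuousOn

/-- The function `s² / (s² + δ²)` serves as a cutoff away from `s = 0`, vanishing there to first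
order. -/
lemma hasDerivAt_cutoff {δ : ℝ} (hδ : 0 < δ) (s : ℝ) :
    HasDerivAt (fun s => s ^ 2 / (s ^ 2 + δ ^ 2)) (2 * δ ^ 2 * s / (s ^ 2 + δ ^ 2) ^ 2) s := by
  have h := (hasDerivAt_pow 2 s).div ((hasDerivAt_pow 2 s).add_const (δ ^ 2))
    (by positivity : s ^ 2 + δ ^ 2 ≠ 0)
  refine h.congr_deriv ?_
  congr 1
  norm_num
  ring

lemma hasDerivAt_arctan_div {δ : ℝ} (hδ : 0 < δ) (s : ℝ) :
    HasDerivAt (fun s => δ * Real.arctan (s / δ)) (δ ^ 2 / (s ^ 2 + δ ^ 2)) s := by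
  have h := (((hasDerivAt_id s).div_const δ).arctan).const_mul δ
  refine h.congr_deriv ?_
  simp only [id]
  field_simp
  ring

/-- The function `s - δ arctan (s / δ)` is an approximation of the identity that vanishes to first
order at `s = 0`. -/
lemma hasDerivAt_sub_arctan {δ : ℝ} (hδ : 0 < δ) (s : ℝ) :
    HasDerivAt (fun s => s - δ * Real.arctan (s / δ)) (s ^ 2 / (s ^ 2 + δ ^ 2)) s := by
  have h := (hasDerivAt_id s).sub (hasDerivAt_arctan_div hδ s)
  refine h.congr_deriv ?_
  field_simp
  ring

lemma abs_mul_arctan_le {δ : ℝ} (hδ : 0 < δ) (s : ℝ) :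
    |δ * Real.arctan (s / δ)| ≤ δ * 2 := by
  rw [abs_mul, abs_of_pos hδ]
  gcongr
  have h1 := Real.arctan_lt_pi_div_two (s / δ)
  have h2 := Real.neg_pi_div_two_lt_arctan (s / δ)
  have h3 := Real.pi_lt_four
  rw [abs_le]; constructor <;> linarith

lemma abs_sub_arctan_le {δ : ℝ} (hδ : 0 < δ) (s : ℝ) :
    |s - δ * Real.arctan (s / δ)| ≤ |s| := by
  have h := Convex.norm_image_sub_le_of_norm_hasDerivWithin_le (s := Set.univ)
    (f := fun s => s - δ * Real.arctan (s / δ)) (C := 1)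
    (fun x _ => (hasDerivAt_sub_arctan hδ x).hasDerivWithinAt) (fun x _ => by
      rw [Real.norm_eq_abs, abs_of_nonneg (by positivity), div_le_one (by positivity)]
      nlinarith) convex_univ (Set.mem_univ 0) (Set.mem_univ s)
  simpa using h

lemma cutoff_nonneg (δ s : ℝ) : 0 ≤ s ^ 2 / (s ^ 2 + δ ^ 2) := by positivity

lemma cutoff_le_one (δ s : ℝ) : s ^ 2 / (s ^ 2 + δ ^ 2) ≤ 1 :=
  div_le_one_of_le₀ (by nlinarith) (by positivity)

lemma tendsto_cutoff {s : ℝ} (hs : s ≠ 0) :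
    Tendsto (fun k : ℕ => s ^ 2 / (s ^ 2 + (1 / ((k : ℝ) + 1)) ^ 2)) atTop (𝓝 1) := by
  have h : Tendsto (fun k : ℕ => s ^ 2 / (s ^ 2 + (1 / ((k : ℝ) + 1)) ^ 2)) atTop
      (𝓝 (s ^ 2 / (s ^ 2 + 0 ^ 2))) :=
    tendsto_const_nhds.div (tendsto_const_nhds.add
      ((tendsto_one_div_add_atTop_nhds_zero_nat (𝕜 := ℝ)).pow 2)) (by simpa using hs)
  simpa [hs] using h

lemma tendsto_mul_arctan (s : ℕ → ℝ) :
    Tendsto (fun k : ℕ => 1 / ((k : ℝ) + 1) * Real.arctan (s k / (1 / ((k : ℝ) + 1)))) atTop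
      (𝓝 0) := by
  have h : Tendsto (fun k : ℕ => 1 / ((k : ℝ) + 1) * 2) atTop (𝓝 0) := by
    simpa using (tendsto_one_div_add_atTop_nhds_zero_nat (𝕜 := ℝ)).mul_const 2
  refine squeeze_zero_norm (fun k => ?_) h
  exact abs_mul_arctan_le (δ := 1 / ((k : ℝ) + 1)) (by positivity) _

variable [MeasurableSpace E] [BorelSpace E]

/-- The gradient vanishes almost everywhere on a level set. This is obtained by testing the
divergence theorem with `δ arctan (u / δ) η ∇u`, which tends to `0` uniformly while its divergence
retains `η |∇u|² 1_{u = 0}`. -/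
lemma ae_gradient_eq_zero (μ : Measure E) [μ.IsAddHaarMeasure] {u : E → ℝ} (hu : ContDiff ℝ 1 u)
    {G : E → E} (hG : ContDiff ℝ 1 G) (hGu : ∀ x, fderiv ℝ u x = innerSL ℝ (G x))
    {η : E → ℝ} (hη : ContDiff ℝ 1 η) (hη0 : ∀ x, 0 ≤ η x) (hηc : HasCompactSupport η) :
    ∀ᵐ x ∂μ, u x = 0 → η x * ‖G x‖ ^ 2 = 0 := by
  set d : ℕ → ℝ := fun k => 1 / ((k : ℝ) + 1) with hd
  have hdp : ∀ k, 0 < d k := fun k => by simp only [hd]; positivity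
  set Z : E → E := fun x => η x • G x with hZ
  have hZd : ContDiff ℝ 1 Z := hη.smul hG
  have hZc : HasCompactSupport Z := hηc.smul_right
  have hdiv : Continuous fun x => trL (fderiv ℝ Z x) :=
    trL.continuous.comp (hZd.continuous_fderiv (by simp))
  have hdivc : HasCompactSupport fun x => trL (fderiv ℝ Z x) :=
    (hZc.fderiv (𝕜 := ℝ)).comp_left (g := fun A => trL A) (map_zero _)
  have iA : Integrable (fun x => trL (fderiv ℝ Z x)) μ :=
    hdiv.integrable_of_hasCompactSupport hdivc
  have cB : Continuous fun x => η x * ‖G x‖ ^ 2 :=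
    hη.continuous.mul (hG.continuous.norm.pow 2)
  have iB : Integrable (fun x => η x * ‖G x‖ ^ 2) μ :=
    cB.integrable_of_hasCompactSupport hηc.mul_right
  have cu := hu.continuous
  have cat : ∀ k, Continuous fun x => d k * Real.arctan (u x / d k) := fun k =>
    continuous_const.mul (Real.continuous_arctan.comp (cu.div_const _))
  have cq : ∀ k, Continuous fun x => d k ^ 2 / (u x ^ 2 + d k ^ 2) := fun k =>
    continuous_const.div ((cu.pow 2).add continuous_const) fun x => by
      have := hdp k; positivity
  have b2 : ∀ k x, |d k * Real.arctan (u x / d k)| ≤ 2 := fun k x =>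
    (abs_mul_arctan_le (hdp k) _).trans (by
      have : d k ≤ 1 := by
        simp only [hd]; rw [div_le_one (by positivity)]; linarith [k.cast_nonneg (α := ℝ)]
      linarith)
  have bq : ∀ k x, |d k ^ 2 / (u x ^ 2 + d k ^ 2)| ≤ 1 := fun k x => by
    rw [abs_of_nonneg (by positivity)]
    exact div_le_one_of_le₀ (by nlinarith [sq_nonneg (u x)]) (by positivity)
  have key : ∀ k, ∫ x, d k * Real.arctan (u x / d k) * trL (fderiv ℝ Z x) ∂μ +
      ∫ x, d k ^ 2 / (u x ^ 2 + d k ^ 2) * (η x * ‖G x‖ ^ 2) ∂μ = 0 := by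
    intro k
    rw [← integral_add
      (iA.bdd_mul (c := 2) (cat k).aestronglyMeasurable (Eventually.of_forall (b2 k)))
      (iB.bdd_mul (c := 1) (cq k).aestronglyMeasurable (Eventually.of_forall (bq k)))]
    have hXd : ContDiff ℝ 1 fun x => (d k * Real.arctan (u x / d k)) • Z x :=
      (contDiff_const.mul ((hu.div_const _).arctan)).smul hZd
    rw [← integral_trL_fderiv_eq_zero μ hXd hZc.smul_left]
    refine integral_congr_ae (Eventually.of_forall fun x => ?_)
    have e1 := (hasDerivAt_arctan_div (hdp k) (u x)).comp_hasFDerivAt x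
      (hu.differentiable (by simp) x).hasFDerivAt
    have e2 := e1.smul (hZd.differentiable (by simp) x).hasFDerivAt
    refine Eq.symm ((congrArg trL e2.fderiv).trans ?_)
    rw [hGu x, map_add, map_smul, trL_smulRight]
    simp [hZ]
    ring
  have l1 : Tendsto (fun k => ∫ x, d k * Real.arctan (u x / d k) * trL (fderiv ℝ Z x) ∂μ) atTop
      (𝓝 (∫ x, 0 * trL (fderiv ℝ Z x) ∂μ)) := by
    refine tendsto_integral_of_dominated_convergence (fun x => 2 * |trL (fderiv ℝ Z x)|)
      (fun k => ((cat k).mul hdiv).aestronglyMeasurable) (iA.abs.const_mul 2)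
      (fun k => Eventually.of_forall fun x => ?_) (Eventually.of_forall fun x => ?_)
    · rw [norm_mul]
      exact mul_le_mul_of_nonneg_right (b2 k x) (norm_nonneg _)
    · exact (tendsto_mul_arctan fun _ => u x).mul_const _
  have l2 : Tendsto (fun k => ∫ x, d k ^ 2 / (u x ^ 2 + d k ^ 2) * (η x * ‖G x‖ ^ 2) ∂μ) atTop
      (𝓝 (∫ x, (if u x = 0 then 1 else 0) * (η x * ‖G x‖ ^ 2) ∂μ)) := by
    refine tendsto_integral_of_dominated_convergence (fun x => 1 * |η x * ‖G x‖ ^ 2|)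
      (fun k => ((cq k).mul cB).aestronglyMeasurable) (iB.abs.const_mul 1)
      (fun k => Eventually.of_forall fun x => ?_) (Eventually.of_forall fun x => ?_)
    · rw [norm_mul]
      exact mul_le_mul_of_nonneg_right (bq k x) (norm_nonneg _)
    · refine Tendsto.mul_const _ ?_
      by_cases hx : u x = 0
      · simp only [hx, if_true]
        refine tendsto_const_nhds.congr fun k => ?_
        have := hdp k
        field_simp
        simp
      · simp only [hx, if_false]
        have h := (tendsto_cutoff hx).const_sub 1
        rw [sub_self] at h
        refine h.congr fun k => ?_
        have := hdp k
        simp only [hd]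
        field_simp
        ring
  have h0 : ∫ x, (if u x = 0 then 1 else 0) * (η x * ‖G x‖ ^ 2) ∂μ = 0 := by
    have := tendsto_nhds_unique (l1.add l2) (by simp only [key]; exact tendsto_const_nhds)
    simpa using this
  have hms : MeasurableSet {x | u x = 0} := (isClosed_eq cu continuous_const).measurableSet
  have hi : Integrable (fun x => (if u x = 0 then (1:ℝ) else 0) * (η x * ‖G x‖ ^ 2)) μ := by
    refine iB.bdd_mul (c := 1) (Measurable.ite hms measurable_const
      measurable_const).aestronglyMeasurable (Eventually.of_forall fun x => ?_)
    split_ifs <;> simp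
  have hz := (integral_eq_zero_iff_of_nonneg (fun x => by
    have := hη0 x
    simp only [Pi.zero_apply]
    split_ifs <;> positivity) hi).1 h0
  filter_upwards [hz] with x hx hux
  simpa [hux] using hx

end Cutoffs

/-! ### Removing the regularization -/

section Limit

open Filter Topology Module

variable {E : Type*} [NormedAddCommGroup E] [InnerProductSpace ℝ E] [FiniteDimensional ℝ E]

/-- The right-hand integrand of the Hardy inequality at `x`, for a foliation with gradient field `G`
and a test function with value `p` and gradient `g` at `x`. It is written with
`|∇u| H² = (|∇u| H)² / |∇u|`, so that it vanishes where `G = 0`. -/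
def hardyRhs (G : E → E) (α : ℝ) (y : E) (g : E) (p : ℝ) (x : E) : ℝ :=
  ‖x - y‖ ^ (-α) * (‖x - y‖ ^ 2 *
      (4 * (‖G x‖ * ‖g - inner ℝ g (rdir 0 (G x)) • rdir 0 (G x)‖ ^ 2) +
        tanTrace 0 (G x) (fderiv ℝ G x) ^ 2 / ‖G x‖ * p ^ 2))

lemma hardyRhs_nonneg (G : E → E) (α : ℝ) (y : E) (g : E) (p : ℝ) (x : E) :
    0 ≤ hardyRhs G α y g p x := by
  unfold hardyRhs; positivity

lemma norm_tangential_sq_le (g v : E) :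
    ‖g - inner ℝ g (rdir 0 v) • rdir 0 v‖ ^ 2 ≤ ‖g‖ ^ 2 := by
  have h : ‖rdir 0 v‖ ^ 2 ≤ 1 := pow_le_one₀ (norm_nonneg _) (norm_rdir_le 0 v)
  rw [norm_sub_sq_real, inner_smul_right, norm_smul, mul_pow, Real.norm_eq_abs, sq_abs]
  nlinarith [mul_le_mul_of_nonneg_left h (sq_nonneg (inner ℝ g (rdir 0 v)))]

/-- The right-hand integrand does not increase under multiplication of the gradient by `c ∈ [0, 1]`,
nor under decrease of `|p|`; adding a multiple of `∇u` leaves the tangential gradient unchanged. -/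
lemma hardyRhs_mono (G : E → E) (α : ℝ) (y : E) (g : E) {p q c d : ℝ} (x : E)
    (hc0 : 0 ≤ c) (hc1 : c ≤ 1) (hp : |p| ≤ |q|) :
    hardyRhs G α y (c • g + d • G x) p x ≤ hardyRhs G α y g q x := by
  unfold hardyRhs
  have hp2 : p ^ 2 ≤ q ^ 2 := sq_le_sq.2 hp
  by_cases hx : G x = 0
  · simp [hx]
  set ν := rdir 0 (G x) with hν
  have h1 : ‖ν‖ = 1 := norm_rdir_zero hx
  have hG : G x = ‖G x‖ • ν := by
    conv_lhs => rw [← rlen_smul_rdir 0 (G x), rlen_zero]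
  have hνν : inner ℝ ν ν = (1 : ℝ) := by rw [real_inner_self_eq_norm_sq, h1]; norm_num
  have e : c • g + d • G x - inner ℝ (c • g + d • G x) ν • ν = c • (g - inner ℝ g ν • ν) := by
    rw [hG]
    simp only [inner_add_left, inner_smul_left, hνν, conj_trivial]
    module
  rw [e, norm_smul, mul_pow, Real.norm_eq_abs, sq_abs]
  have hc2 : c ^ 2 ≤ 1 := pow_le_one₀ hc0 hc1
  gcongr
  exact mul_le_of_le_one_left (by positivity) hc2

variable [MeasurableSpace E] [BorelSpace E]

lemma measurable_rdir_zero : Measurable (rdir (0 : ℝ) : E → E) := by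
  unfold rdir
  simp only [rlen_zero]
  exact measurable_norm.inv.smul measurable_id

/-- Local integrability of the right-hand integrand. Without it the right-hand integral would take
the default value `0`. -/
lemma integrable_hardyRhs (μ : Measure E) [μ.IsAddHaarMeasure] {G : E → E} (hG : ContDiff ℝ 2 G)
    (hsymm : ∀ x a b, inner ℝ (fderiv ℝ G x a) b = inner ℝ a (fderiv ℝ G x b))
    {φ : E → ℝ} (hφ : ContDiff ℝ 1 φ)
    {ζ : E → ℝ} (hζ : ContDiff ℝ 1 ζ) (hζ0 : ∀ x, 0 ≤ ζ x) (hζc : HasCompactSupport ζ)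
    {α : ℝ} (hα : 0 ≤ α) (hα1 : α < finrank ℝ E - 1) (y : E) :
    Integrable (fun x => ζ x * hardyRhs G α y (gradient φ x) (φ x) x) μ := by
  have : Nontrivial E := Module.nontrivial_of_finrank_pos (R := ℝ) (by
    have : (0:ℝ) < finrank ℝ E := by linarith
    exact_mod_cast this)
  have cg : Continuous (gradient φ) :=
    (InnerProductSpace.toDual ℝ E).symm.continuous.comp (hφ.continuous_fderiv (by simp))
  have cy : Continuous fun x : E => x - y := continuous_id.sub continuous_const
  have mν : Measurable fun x => rdir 0 (G x) := measurable_rdir_zero.comp hG.continuous.measurable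
  have mr : Measurable fun x : E => ‖x - y‖ ^ (-α) := (cy.norm.measurable).pow_const _
  have mT : Measurable fun x =>
      ‖gradient φ x - inner ℝ (gradient φ x) (rdir 0 (G x)) • rdir 0 (G x)‖ ^ 2 :=
    ((cg.measurable.sub ((cg.measurable.inner mν).smul mν)).norm).pow_const 2
  have m1 : Measurable fun x => ζ x * ‖x - y‖ ^ (-α) * (‖x - y‖ ^ 2 * (4 * (‖G x‖ *
      ‖gradient φ x - inner ℝ (gradient φ x) (rdir 0 (G x)) • rdir 0 (G x)‖ ^ 2))) := by
    have n1 : Measurable fun x => ζ x * ‖x - y‖ ^ (-α) := hζ.continuous.measurable.mul mr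
    have n2 : Measurable fun x : E => ‖x - y‖ ^ 2 := (cy.norm.pow 2).measurable
    have n3 : Measurable fun x => 4 * (‖G x‖ *
        ‖gradient φ x - inner ℝ (gradient φ x) (rdir 0 (G x)) • rdir 0 (G x)‖ ^ 2) :=
      (hG.continuous.norm.measurable.mul mT).const_mul 4
    exact n1.mul (n2.mul n3)
  have c1 : Continuous fun x => ζ x * (‖x - y‖ ^ 2 * (4 * (‖G x‖ * ‖gradient φ x‖ ^ 2))) :=
    hζ.continuous.mul ((cy.norm.pow 2).mul (continuous_const.mul
      (hG.continuous.norm.mul (cg.norm.pow 2))))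
  have i1 : Integrable (fun x => ζ x * ‖x - y‖ ^ (-α) * (‖x - y‖ ^ 2 * (4 * (‖G x‖ *
      ‖gradient φ x - inner ℝ (gradient φ x) (rdir 0 (G x)) • rdir 0 (G x)‖ ^ 2)))) μ := by
    refine Integrable.mono' (integrable_mul_rpow μ (by linarith : α < finrank ℝ E) y
      c1 hζc.mul_right) m1.aestronglyMeasurable
      (Eventually.of_forall fun x => ?_)
    have := hζ0 x
    rw [Real.norm_eq_abs, abs_of_nonneg (by positivity), mul_right_comm]
    gcongr ζ x * (_ * (4 * (_ * ?_))) * _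
    exact norm_tangential_sq_le _ _
  -- `η = 1` on the support of `ζ` makes the continuous factor `|x - y|² φ²` bounded.
  obtain ⟨η, hη1⟩ : ∃ η : E → ℝ, Continuous η ∧ HasCompactSupport η ∧ ∀ x, ζ x ≠ 0 → η x = 1 := by
    obtain ⟨R, hR⟩ := hζc.isBounded.subset_ball (0 : E)
    let b : ContDiffBump (0 : E) := ⟨max R 1, max R 1 + 1, by positivity, by linarith⟩
    refine ⟨b, b.continuous, b.hasCompactSupport, fun x hx => b.one_of_mem_closedBall ?_⟩
    exact Metric.ball_subset_closedBall (Metric.ball_subset_ball (le_max_left _ _)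
      (hR (subset_tsupport _ hx)))
  obtain ⟨cη, hηc, hη⟩ := hη1
  have cc : Continuous fun x => η x * (‖x - y‖ ^ 2 * φ x ^ 2) :=
    cη.mul ((cy.norm.pow 2).mul (hφ.continuous.pow 2))
  obtain ⟨C, hC⟩ := (hηc.mul_right (f' := fun x => ‖x - y‖ ^ 2 * φ x ^ 2)).exists_bound_of_continuous
    cc
  have i2 := (integrable_tanTrace μ hG hsymm hζ hζ0 hζc hα hα1 y).bdd_mul (c := C)
    cc.aestronglyMeasurable (Eventually.of_forall hC)
  refine (i1.add i2).congr (Eventually.of_forall fun x => ?_)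
  by_cases hx : ζ x = 0
  · simp [hx]
  · simp only [Pi.add_apply, hη x hx, hardyRhs]
    ring

/-- Passage to the limit: the boundary condition enters only through the approximations `F k` of
`φ` which vanish to first order on `∂Ω`. -/
lemma hardy_of_approx (μ : Measure E) [μ.IsAddHaarMeasure] {G : E → E} (hG : ContDiff ℝ 2 G)
    (hsymm : ∀ x a b, inner ℝ (fderiv ℝ G x a) b = inner ℝ a (fderiv ℝ G x b))
    {φ : E → ℝ} (hφ : ContDiff ℝ 1 φ) {Ω : Set E} (hΩ : IsOpen Ω)
    {ζ : E → ℝ} (hζ : ContDiff ℝ 1 ζ) (hζ0 : ∀ x, 0 ≤ ζ x) (hζc : HasCompactSupport ζ)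
    (hζΩ : ∀ x ∈ Ω, ζ x = 1)
    {α : ℝ} (hα : 0 ≤ α) (hα1 : α < finrank ℝ E - 1) (y : E)
    {F : ℕ → E → ℝ} (hF : ∀ k, ContDiff ℝ 1 (F k))
    (hFφ : ∀ k x, |F k x| ≤ |φ x|)
    (hF' : ∀ k x, ∃ c d : ℝ, 0 ≤ c ∧ c ≤ 1 ∧ gradient (F k) x = c • gradient φ x + d • G x)
    (h0 : ∀ k, ∀ x ∈ frontier Ω, F k x = 0) (h1 : ∀ k, ∀ x ∈ frontier Ω, fderiv ℝ (F k) x = 0)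
    (hlim : ∀ᵐ x ∂μ, x ∈ Ω → G x ≠ 0 → Tendsto (fun k => F k x) atTop (𝓝 (φ x))) :
    ((finrank ℝ E : ℝ) - 1 - α) ^ 2 * ∫ x in Ω, ‖G x‖ * φ x ^ 2 * ‖x - y‖ ^ (-α) ∂μ ≤
      ∫ x in Ω, hardyRhs G α y (gradient φ x) (φ x) x ∂μ := by
  have : Nontrivial E := Module.nontrivial_of_finrank_pos (R := ℝ) (by
    have : (0:ℝ) < finrank ℝ E := by linarith
    exact_mod_cast this)
  have hG1 : ContDiff ℝ 1 G := hG.of_le (by norm_num)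
  have hmΩ := hΩ.measurableSet
  have hψ := fun k => contDiff_indicator hΩ (hF k) (h0 k) (h1 k)
  have hψc : ∀ k, HasCompactSupport (Ω.indicator (F k)) := fun k =>
    HasCompactSupport.intro hζc fun x hx => Set.indicator_of_notMem (fun h => by
      have := image_eq_zero_of_notMem_tsupport hx
      rw [hζΩ x h] at this
      exact one_ne_zero this) _
  have hψg : ∀ k x, gradient (Ω.indicator (F k)) x = Ω.indicator (gradient (F k)) x := by
    intro k x
    unfold gradient
    rw [(hasFDerivAt_indicator hΩ (hF k) (h0 k) (h1 k) x).fderiv]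
    by_cases hx : x ∈ Ω <;> simp [hx]
  have hR : Integrable (Ω.indicator fun x => hardyRhs G α y (gradient φ x) (φ x) x) μ := by
    refine ((integrable_hardyRhs μ hG hsymm hφ hζ hζ0 hζc hα hα1 y).indicator hmΩ).congr
      (Eventually.of_forall fun x => ?_)
    by_cases hx : x ∈ Ω <;> simp [hx, hζΩ]
  have hle : ∀ k x, hardyRhs G α y (gradient (Ω.indicator (F k)) x) (Ω.indicator (F k) x) x ≤
      Ω.indicator (fun x => hardyRhs G α y (gradient φ x) (φ x) x) x := by
    intro k x
    rw [hψg]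
    by_cases hx : x ∈ Ω
    · simp only [Set.indicator_of_mem hx]
      obtain ⟨c, d, hc0, hc1, hg⟩ := hF' k x
      rw [hg]
      exact hardyRhs_mono G α y _ x hc0 hc1 (hFφ k x)
    · simp [hx, hardyRhs]
  rw [← integral_indicator hmΩ, ← integral_indicator hmΩ]
  set d : ℕ → ℝ := fun k => 1 / ((k : ℝ) + 1) with hd
  have hdp : ∀ k, 0 < d k := fun k => by simp only [hd]; positivity
  have hk := fun k => hardy_test μ hG1 hsymm (hψ k) (hψc k) hα hα1 y hR
    (Eventually.of_forall (hle k)) (hdp k)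
  have hy : ∀ᵐ x ∂μ, x ≠ y := by simp [ae_iff]
  have hcont : ∀ k, Continuous fun x =>
      ‖G x‖ * Ω.indicator (F k) x ^ 2 * rlen (d k) (x - y) ^ (-α) := fun k =>
    (hG1.continuous.norm.mul ((hψ k).continuous.pow 2)).mul
      (contDiff_rpow_rlen (hdp k) _ y).continuous
  have hdom : Integrable (fun x => ζ x * (‖G x‖ * φ x ^ 2) * ‖x - y‖ ^ (-α)) μ := by
    have hc : Continuous fun x => ζ x * (‖G x‖ * φ x ^ 2) :=
      hζ.continuous.mul (hG1.continuous.norm.mul (hφ.continuous.pow 2))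
    exact integrable_mul_rpow μ (by linarith) y hc hζc.mul_right
  suffices hT : Tendsto (fun k => ∫ x, ‖G x‖ * Ω.indicator (F k) x ^ 2 *
      rlen (d k) (x - y) ^ (-α) ∂μ) atTop
      (𝓝 (∫ x, Ω.indicator (fun x => ‖G x‖ * φ x ^ 2 * ‖x - y‖ ^ (-α)) x ∂μ)) from
    le_of_tendsto (hT.const_mul _) (Eventually.of_forall hk)
  refine tendsto_integral_of_dominated_convergence
    (fun x => ζ x * (‖G x‖ * φ x ^ 2) * ‖x - y‖ ^ (-α))
    (fun k => (hcont k).aestronglyMeasurable) hdom (fun k => ?_) ?_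
  · filter_upwards [hy] with x hx
    by_cases hxΩ : x ∈ Ω
    · rw [Set.indicator_of_mem hxΩ, hζΩ x hxΩ, one_mul, Real.norm_eq_abs,
        abs_of_nonneg (mul_nonneg (by positivity) (Real.rpow_nonneg (rlen_nonneg _ _) _))]
      have h2 := sq_le_sq.2 (hFφ k x)
      have h3 := rpow_rlen_le (δ := d k) hα (sub_ne_zero.2 hx)
      have h4 : 0 ≤ rlen (d k) (x - y) ^ (-α) := Real.rpow_nonneg (rlen_nonneg _ _) _
      gcongr
    · have := hζ0 x
      simp only [Set.indicator_of_notMem hxΩ, ne_eq, OfNat.ofNat_ne_zero, not_false_eq_true,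
        zero_pow, mul_zero, zero_mul, norm_zero]
      positivity
  · filter_upwards [hy, hlim] with x hx hl
    by_cases hxΩ : x ∈ Ω
    · simp only [Set.indicator_of_mem hxΩ]
      by_cases hGx : G x = 0
      · simp [hGx]
      · refine (((hl hxΩ hGx).pow 2).const_mul _).mul ?_
        have h5 : Tendsto (fun k => rlen (d k) (x - y)) atTop (𝓝 ‖x - y‖) :=
          (tendsto_rlen _).comp tendsto_one_div_nat_nhdsGT
        exact h5.rpow_const (Or.inl (norm_ne_zero_iff.2 (sub_ne_zero.2 hx)))
    · simp [Set.indicator_of_notMem hxΩ]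

/-- The Hardy inequality on the foliation by the level sets of `u`, in an arbitrary
finite-dimensional Euclidean space. -/
lemma hardy_foliation (μ : Measure E) [μ.IsAddHaarMeasure] {u φ : E → ℝ} (hu : ContDiff ℝ 1 u)
    (hG : ContDiff ℝ 2 (gradient u))
    (hsymm : ∀ x a b, inner ℝ (fderiv ℝ (gradient u) x a) b =
      inner ℝ a (fderiv ℝ (gradient u) x b))
    (hφ : ContDiff ℝ 1 φ) {Ω : Set E} (hΩ : IsOpen Ω) (hΩb : Bornology.IsBounded Ω)
    {α : ℝ} (hα : 0 ≤ α) (hα1 : α < finrank ℝ E - 1) (y : E)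
    (hbd : (∀ x ∈ frontier Ω, u x = 0) ∨ (∀ x ∈ frontier Ω, φ x = 0)) :
    ((finrank ℝ E : ℝ) - 1 - α) ^ 2 *
        ∫ x in Ω, ‖gradient u x‖ * φ x ^ 2 * ‖x - y‖ ^ (-α) ∂μ ≤
      ∫ x in Ω, hardyRhs (gradient u) α y (gradient φ x) (φ x) x ∂μ := by
  obtain ⟨R, hR⟩ := hΩb.subset_ball (0 : E)
  let b : ContDiffBump (0 : E) := ⟨max R 1, max R 1 + 1, by positivity, by linarith⟩
  have hb1 : ∀ x ∈ Ω, b x = 1 := fun x hx => b.one_of_mem_closedBall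
    (Metric.ball_subset_closedBall (Metric.ball_subset_ball (le_max_left _ _) (hR hx)))
  have hb0 : ∀ x, 0 ≤ b x := fun x => b.nonneg
  have dφ := fun x => (hφ.differentiable (by simp) x).hasFDerivAt
  have du := fun x => (hu.differentiable (by simp) x).hasFDerivAt
  set d : ℕ → ℝ := fun k => 1 / ((k : ℝ) + 1) with hd
  have hdp : ∀ k, 0 < d k := fun k => by simp only [hd]; positivity
  rcases hbd with hbd | hbd
  -- If `u = 0` on the boundary, `φ` is multiplied by a cutoff `χ(u)`: its gradient is normal to
  -- the level sets, and `χ(u) → 1` off `{u = 0}`, where `∇u = 0` almost everywhere.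
  · have e : ∀ k x, HasFDerivAt (fun x => u x ^ 2 / (u x ^ 2 + d k ^ 2) * φ x)
        ((u x ^ 2 / (u x ^ 2 + d k ^ 2)) • fderiv ℝ φ x +
          φ x • (2 * d k ^ 2 * u x / (u x ^ 2 + d k ^ 2) ^ 2) • fderiv ℝ u x) x := fun k x =>
      ((hasDerivAt_cutoff (hdp k) (u x)).comp_hasFDerivAt x (du x)).mul (dφ x)
    refine hardy_of_approx μ hG hsymm hφ hΩ b.contDiff hb0 b.hasCompactSupport hb1 hα hα1 y
      (F := fun k x => u x ^ 2 / (u x ^ 2 + d k ^ 2) * φ x) (fun k => ?_) (fun k x => ?_)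
      (fun k x => ⟨u x ^ 2 / (u x ^ 2 + d k ^ 2),
        φ x * (2 * d k ^ 2 * u x / (u x ^ 2 + d k ^ 2) ^ 2), cutoff_nonneg _ _,
        cutoff_le_one _ _, ?_⟩) (fun k x hx => ?_) (fun k x hx => ?_) ?_
    · exact ((hu.pow 2).div ((hu.pow 2).add contDiff_const) fun x => by
        have := hdp k; positivity).mul hφ
    · rw [abs_mul, abs_of_nonneg (cutoff_nonneg _ _)]
      exact mul_le_of_le_one_left (abs_nonneg _) (cutoff_le_one _ _)
    · unfold gradient
      rw [(e k x).fderiv]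
      simp [mul_smul]
    · simp [hbd x hx]
    · rw [(e k x).fderiv]; simp [hbd x hx]
    · filter_upwards [ae_gradient_eq_zero μ hu (hG.of_le (by norm_num))
        (fun x => (hu.differentiable (by simp) x).hasGradientAt.hasFDerivAt.fderiv)
        b.contDiff hb0 b.hasCompactSupport] with x hx hxΩ hGx
      have hux : u x ≠ 0 := fun h => hGx (by simpa [hb1 x hxΩ] using hx h)
      have := (tendsto_cutoff hux).mul_const (φ x)
      rwa [one_mul] at this
  -- If `φ = 0` on the boundary, `φ` itself is truncated near its zero set.
  · have e : ∀ k x, HasFDerivAt (fun x => φ x - d k * Real.arctan (φ x / d k))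
        ((φ x ^ 2 / (φ x ^ 2 + d k ^ 2)) • fderiv ℝ φ x) x := fun k x =>
      (hasDerivAt_sub_arctan (hdp k) (φ x)).comp_hasFDerivAt x (dφ x)
    refine hardy_of_approx μ hG hsymm hφ hΩ b.contDiff hb0 b.hasCompactSupport hb1 hα hα1 y
      (F := fun k x => φ x - d k * Real.arctan (φ x / d k)) (fun k => ?_) (fun k x => ?_)
      (fun k x => ⟨φ x ^ 2 / (φ x ^ 2 + d k ^ 2), 0, cutoff_nonneg _ _,
        cutoff_le_one _ _, ?_⟩) (fun k x hx => ?_) (fun k x hx => ?_)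
      (Eventually.of_forall fun x _ _ => ?_)
    · exact hφ.sub (contDiff_const.mul (hφ.div_const _).arctan)
    · exact abs_sub_arctan_le (hdp k) _
    · unfold gradient
      rw [(e k x).fderiv]
      simp
    · simp [hbd x hx]
    · rw [(e k x).fderiv]; simp [hbd x hx]
    · have := (tendsto_mul_arctan fun _ => φ x).const_sub (φ x)
      rwa [sub_zero] at this

end Limit

/-! ### Euclidean coordinates -/

section Translation

open Filter Topology Module

variable {n : ℕ}

/-- Where `∇u ≠ 0`, `|∇u| H` is the trace of the Hessian of `u` on the tangent space of the
level set. -/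
lemma meanCurv_eq {u : EuclideanSpace ℝ (Fin n) → ℝ} {x : EuclideanSpace ℝ (Fin n)}
    (hG : DifferentiableAt ℝ (gradient u) x) (hx : gradient u x ≠ 0) :
    meanCurv u x = tanTrace 0 (gradient u x) (fderiv ℝ (gradient u) x) / ‖gradient u x‖ := by
  have hr : levelNormal u = fun x => rdir 0 (gradient u x) := by
    funext z; simp [levelNormal, rdir, rlen_zero]
  have hν := hasFDerivAt_rdir (ε := 0) hG.hasFDerivAt
    (by rw [rlen_zero]; exact norm_ne_zero_iff.2 hx)
  rw [← hr] at hν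
  set A := (rlen 0 (gradient u x))⁻¹ • (fderiv ℝ (gradient u) x -
    ((innerSL ℝ (rdir 0 (gradient u x))).comp (fderiv ℝ (gradient u) x)).smulRight
      (rdir 0 (gradient u x))) with hA
  have hsum : meanCurv u x = trL A := by
    rw [trL_apply, LinearMap.trace_eq_sum_inner _ (EuclideanSpace.basisFun (Fin n) ℝ)]
    refine Finset.sum_congr rfl fun i _ => ?_
    have h := ((EuclideanSpace.proj (𝕜 := ℝ) i).hasFDerivAt).comp x hν
    refine (DFunLike.congr_fun h.fderiv _).trans ?_
    simp [EuclideanSpace.inner_single_left]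
  rw [hsum, hA, map_smul, map_sub, trL_smulRight, rlen_zero, smul_eq_mul, tanTrace,
    div_eq_inv_mul]
  simp

/-- Where `∇u ≠ 0` and away from the pole `y`, the two forms of the right-hand integrand agree. -/
lemma hardyRhs_eq {u φ : EuclideanSpace ℝ (Fin n) → ℝ} {x y : EuclideanSpace ℝ (Fin n)}
    (hG : DifferentiableAt ℝ (gradient u) x) (hx : gradient u x ≠ 0) (hy : x ≠ y) (α : ℝ) :
    hardyRhs (gradient u) α y (gradient φ x) (φ x) x =
      ‖gradient u x‖ * (4 * ‖tangGrad u φ x‖ ^ 2 + meanCurv u x ^ 2 * φ x ^ 2) *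
        ‖x - y‖ ^ (2 - α) := by
  have hr : levelNormal u x = rdir 0 (gradient u x) := by
    simp [levelNormal, rdir, rlen_zero]
  have h1 : ‖x - y‖ ^ (2 - α) = ‖x - y‖ ^ 2 * ‖x - y‖ ^ (-α) := by
    rw [sub_eq_add_neg (2 : ℝ) α, Real.rpow_add (norm_pos_iff.2 (sub_ne_zero.2 hy)), Real.rpow_two]
  have hw : ‖gradient u x‖ ≠ 0 := norm_ne_zero_iff.2 hx
  rw [hardyRhs, h1, meanCurv_eq hG hx, tangGrad, hr]
  field_simp

end Translation

/-- Weak geometric Hardy inequality on the foliation by the level sets of `u`. -/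
theorem geometric_hardy_foliation_weak (n : ℕ)
    (Ω : Set (EuclideanSpace ℝ (Fin n))) (hΩo : IsOpen Ω)
    (hΩb : Bornology.IsBounded Ω)
    (u φ : EuclideanSpace ℝ (Fin n) → ℝ)
    (hu : ContDiff ℝ (⊤ : ℕ∞) u) (hφ : ContDiff ℝ 1 φ)
    (α : ℝ) (hα0 : 0 ≤ α) (hα1 : α < (n : ℝ) - 1)
    (y : EuclideanSpace ℝ (Fin n))
    (hbd : (∀ x ∈ frontier Ω, u x = 0) ∨ (∀ x ∈ frontier Ω, φ x = 0)) :
    ((n : ℝ) - 1 - α) ^ 2 *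
        ∫ x in Ω, ‖gradient u x‖ * φ x ^ 2 * ‖x - y‖ ^ (-α)
      ≤ ∫ x in {x ∈ Ω | gradient u x ≠ 0},
          ‖gradient u x‖ * (4 * ‖tangGrad u φ x‖ ^ 2 + meanCurv u x ^ 2 * φ x ^ 2) *
            ‖x - y‖ ^ (2 - α) := by
  have hn : Module.finrank ℝ (EuclideanSpace ℝ (Fin n)) = n := finrank_euclideanSpace_fin
  have hu3 : ContDiff ℝ 3 u :=
    hu.of_le (WithTop.coe_le_coe.2 (le_top : (3 : ℕ∞) ≤ ⊤))
  have hG : ContDiff ℝ 2 (gradient u) :=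
    (InnerProductSpace.toDual ℝ (EuclideanSpace ℝ (Fin n))).symm.contDiff.comp
      (hu3.fderiv_right (by norm_num))
  have hGd : Differentiable ℝ (gradient u) := hG.differentiable (by norm_num)
  have hd2 : ∀ x a b, inner ℝ (fderiv ℝ (gradient u) x a) b =
      fderiv ℝ (fderiv ℝ u) x a b := by
    intro x a b
    have hD : DifferentiableAt ℝ (fderiv ℝ u) x :=
      (hu3.fderiv_right (m := 2) (by norm_num)).differentiable (by norm_num) x
    have h1 := (hGd x).hasFDerivAt.inner ℝ (hasFDerivAt_const b x)
    have h2 := hD.hasFDerivAt.clm_apply (hasFDerivAt_const b x)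
    have h3 : (fun z => inner ℝ (gradient u z) b) = fun z => fderiv ℝ u z b := by
      funext z; exact inner_gradient_left
    rw [h3] at h1
    simpa using DFunLike.congr_fun (h1.unique h2) a
  have hsymm : ∀ x a b, inner ℝ (fderiv ℝ (gradient u) x a) b =
      inner ℝ a (fderiv ℝ (gradient u) x b) := by
    intro x a b
    rw [real_inner_comm _ a, hd2, hd2]
    exact (hu3.contDiffAt.isSymmSndFDerivAt (by simp; norm_num)) a b
  have h := hardy_foliation volume (hu.of_le (by exact_mod_cast le_top)) hG hsymm hφ hΩo hΩb hα0
    (by rw [hn]; exact hα1) y hbd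
  rw [hn] at h
  refine h.trans_eq ?_
  have : Nontrivial (EuclideanSpace ℝ (Fin n)) := Module.nontrivial_of_finrank_pos (R := ℝ) (by
    have : (0:ℝ) < n := by linarith
    rw [hn]; exact_mod_cast this)
  have hy : ∀ᵐ x : EuclideanSpace ℝ (Fin n), x ≠ y := by simp [ae_iff]
  have hm : MeasurableSet {x ∈ Ω | gradient u x ≠ 0} :=
    hΩo.measurableSet.inter (hG.continuous.isOpen_preimage _ isOpen_compl_singleton).measurableSet
  rw [← integral_indicator hΩo.measurableSet, ← integral_indicator hm]
  refine integral_congr_ae ?_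
  filter_upwards [hy] with x hx
  by_cases hxΩ : x ∈ Ω
  · by_cases hGx : gradient u x = 0
    · simp [Set.indicator, hxΩ, hGx, hardyRhs]
    · rw [Set.indicator_of_mem hxΩ,
        Set.indicator_of_mem (show x ∈ {x ∈ Ω | gradient u x ≠ 0} from ⟨hxΩ, hGx⟩)]
      exact hardyRhs_eq (hGd x) hGx hx α
  · simp [Set.indicator, hxΩ]

end
end

section
/- Radial geometric Hardy inequality: if in addition u = u(r_y) is radially symmetric about y, then (n−1)² ∫_Ω |u_{r_y}| φ² r_y^{−α} dx ≤ ∫_{Ω∩{|∇u|>0}} |u_{r_y}| (4|∇_T φ|² + H² φ²) r_y^{2−α} dx, for every α ∈ [0, n−1). -/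
/-!
The inequality holds pointwise, almost everywhere on `S = Ω ∩ {∇u ≠ 0}`.

Since `u` is constant along arcs of spheres centred at `y` that stay in `Ω`, its gradient at `x` is
parallel to `x - y` (`gradient_eq_smul_of_radial`). Near a point of `S` other than `y` the normal
`ν = ∇u/|∇u|` is therefore `±(x - y)/|x - y|`, with a locally constant sign, and its divergence
satisfies `H² = (n - 1)²/|x - y|²` (`meanCurv_sq_of_radial`). Hence the curvature term on the right
equals the integrand on the left, and the term with `|∇_T φ|²` is nonnegative. Outside `S` the left
integrand vanishes because `∇u = 0` there.

Comparing the integrals also requires the right-hand integrand to be integrable: on the bounded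
set `Ω` it is at most a constant times `|x - y|^(-α)`, and `α < n`.
-/

open MeasureTheory
open scoped RealInnerProductSpace

open scoped Classical

noncomputable section

/-- At an interior point, the gradient of a function that is radial about `y` is radial. -/
lemma gradient_eq_smul_of_radial {n : ℕ} {Ω : Set (EuclideanSpace ℝ (Fin n))} (hΩo : IsOpen Ω)
    {u : EuclideanSpace ℝ (Fin n) → ℝ} (hu : Differentiable ℝ u)
    {y : EuclideanSpace ℝ (Fin n)} {g : ℝ → ℝ} (hg : ∀ x ∈ Ω, u x = g ‖x - y‖)
    {x : EuclideanSpace ℝ (Fin n)} (hx : x ∈ Ω) (hxy : x ≠ y) :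
    gradient u x = (⟪gradient u x, x - y⟫ * (‖x - y‖ ^ 2)⁻¹) • (x - y) := by
  have hr : 0 < ‖x - y‖ := norm_pos_iff.2 (sub_ne_zero.2 hxy)
  have key : ∀ v : EuclideanSpace ℝ (Fin n), ‖v‖ = ‖x - y‖ → ⟪x - y, v⟫ = 0 →
      ⟪gradient u x, v⟫ = 0 := by
    intro v hv hv0
    -- The great circle through `x` with velocity `v`, on which `u` is constant near `x`.
    let γ : ℝ → EuclideanSpace ℝ (Fin n) := fun t => y + (Real.cos t • (x - y) + Real.sin t • v)
    have hγ0 : γ 0 = x := by simp [γ]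
    have hγ : HasDerivAt γ v 0 := by
      have h := (((Real.hasDerivAt_cos 0).smul_const (x - y)).add
        ((Real.hasDerivAt_sin 0).smul_const v)).const_add y
      simpa [γ] using h
    have hnorm : ∀ t, ‖γ t - y‖ = ‖x - y‖ := by
      intro t
      have h1 : ‖γ t - y‖ ^ 2 = ‖x - y‖ ^ 2 := by
        have : γ t - y = Real.cos t • (x - y) + Real.sin t • v := by simp [γ]
        rw [this, norm_add_sq_real, norm_smul, norm_smul, mul_pow, mul_pow, inner_smul_left,
          inner_smul_right, hv0, hv]
        simp only [Real.norm_eq_abs, sq_abs]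
        have := Real.sin_sq_add_cos_sq t
        linear_combination ‖x - y‖ ^ 2 * this
      exact (sq_eq_sq₀ (norm_nonneg _) (norm_nonneg _)).1 h1
    have hc : (fun t => u (γ t)) =ᶠ[nhds 0] fun _ => g ‖x - y‖ := by
      have : γ ⁻¹' Ω ∈ nhds (0 : ℝ) :=
        hγ.continuousAt.preimage_mem_nhds (hΩo.mem_nhds (by rw [hγ0]; exact hx))
      filter_upwards [this] with t ht
      rw [hg _ ht, hnorm]
    have hd : HasDerivAt (fun t => u (γ t)) (fderiv ℝ u x v) 0 := by
      have h1 : HasFDerivAt u (fderiv ℝ u x) (γ 0) := by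
        rw [hγ0]; exact (hu x).hasFDerivAt
      exact h1.comp_hasDerivAt 0 hγ
    have hd' := (hasDerivAt_const (0 : ℝ) (g ‖x - y‖)).congr_of_eventuallyEq hc
    rw [inner_gradient_left]
    exact hd.unique hd'
  set c := ⟪gradient u x, x - y⟫ * (‖x - y‖ ^ 2)⁻¹ with hcdef
  set w := gradient u x - c • (x - y) with hw
  have hw0 : ⟪x - y, w⟫ = 0 := by
    rw [hw, inner_sub_right, inner_smul_right, real_inner_self_eq_norm_sq,
      real_inner_comm (gradient u x), hcdef]
    field_simp
    ring
  rw [← sub_eq_zero, ← hw]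
  by_contra hne
  have hwp : 0 < ‖w‖ := norm_pos_iff.2 hne
  have h := key ((‖x - y‖ * ‖w‖⁻¹) • w)
    (by rw [norm_smul, Real.norm_of_nonneg (by positivity)]; field_simp)
    (by rw [inner_smul_right, hw0, mul_zero])
  rw [inner_smul_right] at h
  have h2 : ⟪gradient u x, w⟫ = ‖w‖ ^ 2 := by
    have : gradient u x = w + c • (x - y) := by rw [hw]; abel
    rw [this, inner_add_left, inner_smul_left, hw0, real_inner_self_eq_norm_sq]
    simp
  rw [h2] at h
  have : 0 < ‖x - y‖ * ‖w‖⁻¹ * ‖w‖ ^ 2 := by positivity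
  linarith

/-- The divergence of the unit radial field about `y` is `(n - 1)/|x - y|`. -/
lemma sum_fderiv_radial {n : ℕ} {x y : EuclideanSpace ℝ (Fin n)} (hxy : x ≠ y) (s : ℝ) :
    ∑ i : Fin n, fderiv ℝ (fun z : EuclideanSpace ℝ (Fin n) =>
        s * (‖z - y‖⁻¹ * (z i - y i))) x (EuclideanSpace.single i 1)
      = s * (((n : ℝ) - 1) * ‖x - y‖⁻¹) := by
  have hne : x - y ≠ 0 := sub_ne_zero.2 hxy
  have hr : 0 < ‖x - y‖ := norm_pos_iff.2 hne
  have hi : ∀ i : Fin n, fderiv ℝ (fun z : EuclideanSpace ℝ (Fin n) =>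
      s * (‖z - y‖⁻¹ * (z i - y i))) x (EuclideanSpace.single i 1)
      = s * (‖x - y‖⁻¹ - (x i - y i) ^ 2 * (‖x - y‖ ^ 3)⁻¹) := by
    intro i
    -- The derivative is computed along the line `t ↦ x + t eᵢ`.
    have hdiff : DifferentiableAt ℝ (fun z : EuclideanSpace ℝ (Fin n) =>
        s * (‖z - y‖⁻¹ * (z i - y i))) x := by
      have h1 : DifferentiableAt ℝ (fun z : EuclideanSpace ℝ (Fin n) => ‖z - y‖) x :=
        (differentiableAt_id.sub_const y).norm ℝ hne
      have h2 : DifferentiableAt ℝ (fun z : EuclideanSpace ℝ (Fin n) => z i - y i) x := by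
        fun_prop
      exact ((h1.inv hr.ne').mul h2).const_mul s
    let e : EuclideanSpace ℝ (Fin n) := EuclideanSpace.single i 1
    have hl : HasDerivAt (fun t : ℝ => x + t • e) e 0 := by
      simpa using ((hasDerivAt_id (0 : ℝ)).smul_const e).const_add x
    have hA : HasDerivAt (fun t : ℝ => s * (‖(x + t • e) - y‖⁻¹ * ((x + t • e) i - y i)))
        (fderiv ℝ (fun z : EuclideanSpace ℝ (Fin n) =>
          s * (‖z - y‖⁻¹ * (z i - y i))) x e) 0 := by
      have h1 := hdiff.hasFDerivAt
      have h0 : x + (0 : ℝ) • e = x := by simp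
      rw [← h0] at h1
      have := h1.comp_hasDerivAt 0 hl
      rwa [h0] at this
    have hsq : HasDerivAt (fun t : ℝ => ‖(x + t • e) - y‖ ^ 2) (2 * (x i - y i)) 0 := by
      have := (hl.sub_const y).norm_sq
      simpa [e, EuclideanSpace.inner_single_right] using this
    have hn : HasDerivAt (fun t : ℝ => ‖(x + t • e) - y‖) ((x i - y i) * ‖x - y‖⁻¹) 0 := by
      have h := hsq.sqrt (by simpa using hne)
      simp only [Real.sqrt_sq (norm_nonneg _)] at h
      convert h using 1
      simp
      field_simp
    have hc : HasDerivAt (fun t : ℝ => (x + t • e) i - y i) 1 0 := by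
      have h : (fun t : ℝ => (x + t • e) i - y i) = fun t : ℝ => (x i + t) - y i := by
        ext t; simp [e]
      rw [h]
      exact ((hasDerivAt_id (0 : ℝ)).const_add (x i)).sub_const (y i)
    have hB := ((hn.fun_inv (by simpa using hne)).fun_mul hc).const_mul s
    have := hA.unique hB
    change fderiv ℝ _ x e = _
    rw [this]
    simp
    left
    field_simp
    ring
  rw [Finset.sum_congr rfl fun i _ => hi i, ← Finset.mul_sum, Finset.sum_sub_distrib,
    ← Finset.sum_mul]
  have hs : ∑ i : Fin n, (x i - y i) ^ 2 = ‖x - y‖ ^ 2 := by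
    rw [EuclideanSpace.norm_sq_eq]; simp
  rw [hs]
  simp
  left
  field_simp

/-- The level sets of a function that is radial about `y` are pieces of spheres about `y`, with
mean curvature `±(n - 1)/|x - y|`. -/
lemma meanCurv_sq_of_radial {n : ℕ} {Ω : Set (EuclideanSpace ℝ (Fin n))} (hΩo : IsOpen Ω)
    {u : EuclideanSpace ℝ (Fin n) → ℝ} (hu : Differentiable ℝ u) (hcg : Continuous (gradient u))
    {y : EuclideanSpace ℝ (Fin n)} {g : ℝ → ℝ} (hg : ∀ x ∈ Ω, u x = g ‖x - y‖)
    {x : EuclideanSpace ℝ (Fin n)} (hx : x ∈ Ω) (hxy : x ≠ y) (hgx : gradient u x ≠ 0) :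
    meanCurv u x ^ 2 = ((n : ℝ) - 1) ^ 2 * (‖x - y‖ ^ 2)⁻¹ := by
  let f : EuclideanSpace ℝ (Fin n) → ℝ := fun z => ⟪gradient u z, z - y⟫
  have hf : Continuous f := hcg.inner (continuous_id.sub continuous_const)
  have hν : ∀ z ∈ Ω, z ≠ y →
      levelNormal u z = (|f z|⁻¹ * f z * ‖z - y‖⁻¹) • (z - y) := by
    intro z hz hzy
    have hr : 0 < ‖z - y‖ := norm_pos_iff.2 (sub_ne_zero.2 hzy)
    have h := gradient_eq_smul_of_radial hΩo hu hg hz hzy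
    change gradient u z = (f z * (‖z - y‖ ^ 2)⁻¹) • (z - y) at h
    rw [levelNormal, h, norm_smul, norm_mul, smul_smul, Real.norm_eq_abs,
      Real.norm_of_nonneg (by positivity : 0 ≤ (‖z - y‖ ^ 2)⁻¹)]
    congr 1
    by_cases h0 : f z = 0
    · simp [h0]
    · have : |f z| ≠ 0 := abs_ne_zero.2 h0
      field_simp
  have hfx : f x ≠ 0 := by
    intro h0
    have h := gradient_eq_smul_of_radial hΩo hu hg hx hxy
    change gradient u x = (f x * (‖x - y‖ ^ 2)⁻¹) • (x - y) at h
    rw [h0] at h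
    simp at h
    exact hgx h
  have hsign : ∃ s : ℝ, s ^ 2 = 1 ∧ ∀ᶠ z in nhds x, |f z|⁻¹ * f z = s := by
    rcases lt_or_gt_of_ne hfx with h | h
    · refine ⟨-1, by norm_num, ?_⟩
      filter_upwards [hf.continuousAt.eventually_lt continuousAt_const h] with z hz
      rw [abs_of_neg hz]
      field_simp [hz.ne]
    · refine ⟨1, by norm_num, ?_⟩
      filter_upwards [continuousAt_const.eventually_lt hf.continuousAt h] with z hz
      rw [abs_of_pos hz]
      field_simp [hz.ne']
  obtain ⟨s, hs, hev⟩ := hsign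
  have hloc : ∀ i : Fin n, (fun z => levelNormal u z i) =ᶠ[nhds x]
      fun z => s * (‖z - y‖⁻¹ * (z i - y i)) := by
    intro i
    filter_upwards [hev, hΩo.mem_nhds hx, isOpen_ne.mem_nhds hxy] with z h1 h2 h3
    rw [hν z h2 h3, h1]
    simp [mul_assoc]
  have hm : meanCurv u x = s * (((n : ℝ) - 1) * ‖x - y‖⁻¹) := by
    rw [meanCurv, ← sum_fderiv_radial hxy s]
    exact Finset.sum_congr rfl fun i _ => by rw [(hloc i).fderiv_eq]
  rw [hm, mul_pow, hs, one_mul, mul_pow, inv_pow]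

lemma norm_tangGrad_le {n : ℕ} (u φ : EuclideanSpace ℝ (Fin n) → ℝ)
    {x : EuclideanSpace ℝ (Fin n)} (hgx : gradient u x ≠ 0) :
    ‖tangGrad u φ x‖ ^ 2 ≤ ‖gradient φ x‖ ^ 2 := by
  have h1 : ‖levelNormal u x‖ = 1 := by
    have := norm_pos_iff.2 hgx
    rw [levelNormal, norm_smul, norm_inv, norm_norm]
    field_simp
  rw [tangGrad, norm_sub_sq_real, inner_smul_right, norm_smul, mul_pow, h1, Real.norm_eq_abs,
    sq_abs]
  nlinarith [sq_nonneg ⟪gradient φ x, levelNormal u x⟫]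

lemma abs_radialDeriv_le {n : ℕ} (u : EuclideanSpace ℝ (Fin n) → ℝ)
    (y x : EuclideanSpace ℝ (Fin n)) : |radialDeriv u y x| ≤ ‖gradient u x‖ := by
  refine (abs_real_inner_le_norm _ _).trans ?_
  rw [norm_smul, norm_inv, norm_norm]
  exact mul_le_of_le_one_right (norm_nonneg _) inv_mul_le_one

lemma integrableOn_rpow_norm_sub {n : ℕ} {Ω : Set (EuclideanSpace ℝ (Fin n))}
    (hΩb : Bornology.IsBounded Ω) (y : EuclideanSpace ℝ (Fin n)) {α : ℝ}
    (hn : 1 ≤ n) (hα : α < n) :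
    IntegrableOn (fun x => ‖x - y‖ ^ (-α)) Ω := by
  obtain ⟨R, hR⟩ := hΩb.subset_closedBall y
  refine IntegrableOn.mono_set ?_ hR
  have h : LocallyIntegrable (fun x : EuclideanSpace ℝ (Fin n) => ‖x‖ ^ (-α)) := by
    refine locallyIntegrable_of_norm_le_rpow (C := 1) (α := α) (by simpa using hn)
      (by simpa using hα) (Filter.Eventually.of_forall fun x => ?_) ?_
    · rw [one_mul, Real.norm_of_nonneg (by positivity)]
    · exact (measurable_norm.pow_const _).aestronglyMeasurable
  have h2 := h.integrableOn_isCompact (isCompact_closedBall (0 : EuclideanSpace ℝ (Fin n)) R)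
  have h3 := ((measurePreserving_sub_right volume y).integrableOn_comp_preimage
    (MeasurableEquiv.subRight y).measurableEmbedding).2 h2
  have hball : (fun x => x - y) ⁻¹' Metric.closedBall 0 R = Metric.closedBall y R := by
    ext x
    simp [dist_eq_norm]
  rwa [hball] at h3

lemma continuous_gradient_of_contDiff {n : ℕ} {f : EuclideanSpace ℝ (Fin n) → ℝ}
    (hf : ContDiff ℝ 1 f) : Continuous (gradient f) :=
  (InnerProductSpace.toDual ℝ _).symm.continuous.comp (hf.continuous_fderiv one_ne_zero)

/-- Radial geometric Hardy inequality: if `u` is radially symmetric about `y`. -/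
theorem geometric_hardy_foliation_radial (n : ℕ)
    (Ω : Set (EuclideanSpace ℝ (Fin n))) (hΩo : IsOpen Ω)
    (hΩb : Bornology.IsBounded Ω)
    (u φ : EuclideanSpace ℝ (Fin n) → ℝ)
    (hu : ContDiff ℝ (⊤ : ℕ∞) u) (hφ : ContDiff ℝ 1 φ)
    (α : ℝ) (hα0 : 0 ≤ α) (hα1 : α < (n : ℝ) - 1)
    (y : EuclideanSpace ℝ (Fin n))
    (hrad : ∃ g : ℝ → ℝ, ∀ x ∈ closure Ω, u x = g ‖x - y‖)
    (hbd : (∀ x ∈ frontier Ω, u x = 0) ∨ (∀ x ∈ frontier Ω, φ x = 0)) :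
    ((n : ℝ) - 1) ^ 2 *
        ∫ x in Ω, |radialDeriv u y x| * φ x ^ 2 * ‖x - y‖ ^ (-α)
      ≤ ∫ x in {x ∈ Ω | gradient u x ≠ 0},
          |radialDeriv u y x| *
            (4 * ‖tangGrad u φ x‖ ^ 2 + meanCurv u x ^ 2 * φ x ^ 2) *
            ‖x - y‖ ^ (2 - α) := by
  obtain ⟨g, hg'⟩ := hrad
  have hg : ∀ x ∈ Ω, u x = g ‖x - y‖ := fun x hx => hg' x (subset_closure hx)
  have hn : 1 < n := by
    have : (1 : ℝ) < n := by linarith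
    exact_mod_cast this
  have : Nonempty (Fin n) := ⟨⟨0, by omega⟩⟩
  have hu1 : ContDiff ℝ 1 u := hu.of_le (by exact_mod_cast le_top)
  have hud : Differentiable ℝ u := hu1.differentiable one_ne_zero
  have hcu := continuous_gradient_of_contDiff hu1
  have hcφ := continuous_gradient_of_contDiff hφ
  set S := {x ∈ Ω | gradient u x ≠ 0} with hS
  have hSo : IsOpen S := hΩo.inter (isOpen_ne.preimage hcu)
  have hSΩ : S ⊆ Ω := fun x hx => hx.1
  have hSΩ0 : ∀ x ∈ Ω \ S, |radialDeriv u y x| * φ x ^ 2 * ‖x - y‖ ^ (-α) = 0 := by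
    intro x hx
    have : gradient u x = 0 := by
      by_contra h
      exact hx.2 ⟨hx.1, h⟩
    simp [radialDeriv, this]
  rw [setIntegral_eq_of_subset_of_forall_sdiff_eq_zero hΩo.measurableSet hSΩ hSΩ0,
    ← integral_const_mul]
  have hae : ∀ᵐ x ∂(volume.restrict S), x ∈ S ∧ x ≠ y :=
    (ae_restrict_mem hSo.measurableSet).and
      (ae_restrict_of_ae (Measure.ae_ne volume y))
  have hexp : ∀ x, x ≠ y → ‖x - y‖ ^ (2 - α) = ‖x - y‖ ^ 2 * ‖x - y‖ ^ (-α) := by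
    intro x hxy
    have hr : 0 < ‖x - y‖ := norm_pos_iff.2 (sub_ne_zero.2 hxy)
    rw [sub_eq_add_neg 2 α, Real.rpow_add hr, Real.rpow_two]
  -- Off the centre, the weight `r²` cancels the factor `r⁻²` of the squared curvature.
  have hG : ∀ x ∈ S, x ≠ y → |radialDeriv u y x| *
            (4 * ‖tangGrad u φ x‖ ^ 2 + meanCurv u x ^ 2 * φ x ^ 2) *
            ‖x - y‖ ^ (2 - α) = |radialDeriv u y x| *
            (4 * ‖tangGrad u φ x‖ ^ 2 * ‖x - y‖ ^ 2 + ((n : ℝ) - 1) ^ 2 * φ x ^ 2) *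
            ‖x - y‖ ^ (-α) := by
    intro x hx hxy
    have hr : 0 < ‖x - y‖ := norm_pos_iff.2 (sub_ne_zero.2 hxy)
    rw [hexp x hxy, meanCurv_sq_of_radial hΩo hud hcu hg hx.1 hxy hx.2]
    field_simp
  refine integral_mono_of_nonneg (Filter.Eventually.of_forall fun x => ?_) ?_ ?_
  · dsimp only [Pi.zero_apply]; positivity
  · let K : EuclideanSpace ℝ (Fin n) → ℝ := fun x => ‖gradient u x‖ *
      (4 * ‖gradient φ x‖ ^ 2 * ‖x - y‖ ^ 2 + ((n : ℝ) - 1) ^ 2 * φ x ^ 2)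
    have hK : Continuous K := by
      have := hφ.continuous
      fun_prop
    obtain ⟨C, hC⟩ := hΩb.isCompact_closure.exists_bound_of_continuousOn hK.continuousOn
    have hI : IntegrableOn (fun x => C * ‖x - y‖ ^ (-α)) S :=
      ((integrableOn_rpow_norm_sub hΩb y hn.le (by linarith)).mono_set hSΩ).const_mul C
    refine Integrable.mono' hI ?_ ?_
    · have hν : Measurable (levelNormal u) := hcu.measurable.norm.inv.smul hcu.measurable
      have hT : Measurable (tangGrad u φ) :=
        hcφ.measurable.sub (Measurable.fun_smul (hcφ.measurable.inner hν) hν)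
      have hH : Measurable (meanCurv u) :=
        Finset.measurable_sum _ fun i _ => measurable_fderiv_apply_const ℝ _ _
      have hxy : Measurable fun x : EuclideanSpace ℝ (Fin n) => x - y :=
        measurable_id.sub_const y
      have hR : Measurable (radialDeriv u y) :=
        hcu.measurable.inner (hxy.norm.inv.smul hxy)
      have hR' : Measurable fun x => |radialDeriv u y x| := hR.norm
      have hφm := hφ.continuous.measurable
      exact ((hR'.mul (((hT.norm.pow_const 2).const_mul 4).add
        ((hH.pow_const 2).mul (hφm.pow_const 2)))).mul
          (hxy.norm.pow_const (2 - α))).aestronglyMeasurable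
    · filter_upwards [hae] with x hx
      rw [hG x hx.1 hx.2, Real.norm_of_nonneg (by positivity)]
      have hKx : K x ≤ C := (le_abs_self _).trans (hC x (subset_closure hx.1.1))
      refine mul_le_mul_of_nonneg_right (le_trans ?_ hKx) (by positivity)
      have h1 := norm_tangGrad_le u φ hx.1.2
      have h2 := abs_radialDeriv_le u y x
      dsimp only [K]
      gcongr
  · filter_upwards [hae] with x hx
    rw [hG x hx.1 hx.2]
    have : 0 ≤ |radialDeriv u y x| * (4 * ‖tangGrad u φ x‖ ^ 2 * ‖x - y‖ ^ 2) * ‖x - y‖ ^ (-α) := by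
      positivity
    linarith

end
end

section
/- Sternberg–Zumbrun geometric stability inequality: if u is a smooth stable solution of −Δu = f(u) in a smooth bounded domain Ω ⊂ ℝⁿ (f ∈ C¹), then for every η ∈ C¹(Ω̄) with η = 0 on ∂Ω, ∫_{Ω∩{|∇u|>0}} (|∇_T|∇u||² + |A|²|∇u|²) η² dx ≤ ∫_Ω |∇u|² |∇η|² dx. -/
/-!
The classical argument tests stability with `ξ = |∇u| η`. Since `|∇u|` need not be `C¹` at critical
points, it is replaced by `φ = (δ + |∇u|²)^{1/2}`, `δ > 0`, for which `φ ∇φ = D²u ∇u` is smooth.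
Expanding,
`|∇(φη)|² = φ² |∇η|² + 2η ∇η · D²u ∇u + η² |D²u ∇u|² / φ²`.
The linearized equation `-Δ∂ₖu = f'(u) ∂ₖu` gives
`div (D²u ∇u) = |D²u|² - f'(u) |∇u|²` (`divergence_hess_grad`), and the divergence theorem applied
to `η² D²u ∇u` eliminates the cross term, leaving (`regularized_inequality`)
`∫_Ω (|D²u|² - |D²u ∇u|² / (δ + |∇u|²)) η² + δ ∫_Ω f'(u) η² ≤ ∫_Ω (δ + |∇u|²) |∇η|²`.

The divergence theorem needs no regularity of `∂Ω`: as `η = 0` on `∂Ω`, the extension of `η²` by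
zero is differentiable on the whole space (`hasFDerivAt_indicator_sq`), so integration by parts on
`ℝⁿ` applies (`integral_pdv_eq_zero`).

The integrand on the left is nonnegative by Cauchy–Schwarz, and off the critical set it is at least
`(|D²u|² - |D²u ∇u|² / |∇u|²) η²`, which equals the geometric integrand (`geometric_identity`):
with `ν = ∇u / |∇u|` and `P = 1 - ν νᵀ` one has `∇_T |∇u| = P D²u ν`,
`|A|² |∇u|² = |P D²u P|²` and `|P D²u P|² = |D²u|² - |D²u ν|² - |P D²u ν|²`.
Letting `δ → 0` concludes.
-/

open MeasureTheory
open scoped RealInnerProductSpace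

noncomputable section

/-- Laplacian `Δf = ∑ᵢ ∂ᵢᵢf`. -/
def lap {n : ℕ} (f : EuclideanSpace ℝ (Fin n) → ℝ)
    (x : EuclideanSpace ℝ (Fin n)) : ℝ :=
  ∑ i : Fin n,
    fderiv ℝ (fun y => fderiv ℝ f y (EuclideanSpace.single i 1)) x
      (EuclideanSpace.single i 1)

/-- Squared second fundamental form `|A|² = ∑_{i,j} (δᵢ νʲ)²` of the level sets
of `u`, where `δᵢ` is the tangential derivative. -/
def sffSq {n : ℕ} (u : EuclideanSpace ℝ (Fin n) → ℝ)
    (x : EuclideanSpace ℝ (Fin n)) : ℝ :=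
  ∑ i : Fin n, ∑ j : Fin n,
    (fderiv ℝ (fun y => levelNormal u y j) x (EuclideanSpace.single i 1)
      - (∑ k : Fin n, levelNormal u x k *
          fderiv ℝ (fun y => levelNormal u y j) x (EuclideanSpace.single k 1)) *
        levelNormal u x i) ^ 2

/-! ### Partial derivatives -/

/-- The partial derivative `∂ᵢ g`, as a function. -/
def pdv {n : ℕ} (i : Fin n) (g : EuclideanSpace ℝ (Fin n) → ℝ) :
    EuclideanSpace ℝ (Fin n) → ℝ :=
  fun y => fderiv ℝ g y (EuclideanSpace.single i 1)

section Pdv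

variable {n : ℕ}

lemma gradient_coord (g : EuclideanSpace ℝ (Fin n) → ℝ) (x : EuclideanSpace ℝ (Fin n))
    (i : Fin n) : gradient g x i = pdv i g x := by
  have h := inner_gradient_left (𝕜 := ℝ) (f := g) (x := x) (y := EuclideanSpace.single i (1 : ℝ))
  rw [EuclideanSpace.inner_single_right] at h
  simpa [pdv] using h

lemma norm_gradient_sq (g : EuclideanSpace ℝ (Fin n) → ℝ) (x : EuclideanSpace ℝ (Fin n)) :
    ‖gradient g x‖ ^ 2 = ∑ i, pdv i g x ^ 2 := by
  simp only [EuclideanSpace.real_norm_sq_eq, gradient_coord]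

lemma contDiff_pdv {g : EuclideanSpace ℝ (Fin n) → ℝ} (hg : ContDiff ℝ (⊤ : ℕ∞) g) (i : Fin n) :
    ContDiff ℝ (⊤ : ℕ∞) (pdv i g) :=
  (hg.fderiv_right (m := (⊤ : ℕ∞)) (by simp)).clm_apply contDiff_const

lemma continuous_pdv {g : EuclideanSpace ℝ (Fin n) → ℝ} (hg : ContDiff ℝ 1 g) (i : Fin n) :
    Continuous (pdv i g) :=
  (hg.continuous_fderiv (by simp)).clm_apply continuous_const

lemma pdv_comm {g : EuclideanSpace ℝ (Fin n) → ℝ} (hg : ContDiff ℝ (⊤ : ℕ∞) g) (i j : Fin n) :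
    pdv i (pdv j g) = pdv j (pdv i g) := by
  funext x
  have hd : DifferentiableAt ℝ (fderiv ℝ g) x :=
    ((hg.fderiv_right (m := (⊤ : ℕ∞)) (by simp)).differentiable (by simp)) x
  have key : ∀ a b : Fin n, pdv a (pdv b g) x
      = fderiv ℝ (fderiv ℝ g) x (EuclideanSpace.single a 1) (EuclideanSpace.single b 1) := by
    intro a b
    have := (hd.hasFDerivAt.clm_apply
      (hasFDerivAt_const (EuclideanSpace.single b (1 : ℝ)) x)).fderiv
    change fderiv ℝ (fun y => fderiv ℝ g y (EuclideanSpace.single b 1)) x _ = _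
    rw [this]
    simp
  rw [key, key]
  have hs : IsSymmSndFDerivAt ℝ g x :=
    hg.contDiffAt.isSymmSndFDerivAt
      (by rw [minSmoothness_of_isRCLikeNormedField]; exact WithTop.coe_le_coe.2 le_top)
  exact hs _ _

lemma pdv_add {g h : EuclideanSpace ℝ (Fin n) → ℝ} {x : EuclideanSpace ℝ (Fin n)} (i : Fin n)
    (hg : DifferentiableAt ℝ g x) (hh : DifferentiableAt ℝ h x) :
    pdv i (fun y => g y + h y) x = pdv i g x + pdv i h x := by
  simp only [pdv]
  rw [fderiv_fun_add hg hh]; rfl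

lemma pdv_mul {g h : EuclideanSpace ℝ (Fin n) → ℝ} {x : EuclideanSpace ℝ (Fin n)} (i : Fin n)
    (hg : DifferentiableAt ℝ g x) (hh : DifferentiableAt ℝ h x) :
    pdv i (fun y => g y * h y) x = g x * pdv i h x + h x * pdv i g x := by
  simp only [pdv]
  rw [fderiv_fun_mul hg hh]; rfl

lemma pdv_sum {ι : Type*} {s : Finset ι} {g : ι → EuclideanSpace ℝ (Fin n) → ℝ}
    {x : EuclideanSpace ℝ (Fin n)} (i : Fin n) (hg : ∀ k ∈ s, DifferentiableAt ℝ (g k) x) :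
    pdv i (fun y => ∑ k ∈ s, g k y) x = ∑ k ∈ s, pdv i (g k) x := by
  simp only [pdv]
  rw [fderiv_fun_sum hg]
  simp

lemma pdv_sqrt {g : EuclideanSpace ℝ (Fin n) → ℝ} {x : EuclideanSpace ℝ (Fin n)} (i : Fin n)
    (hg : DifferentiableAt ℝ g x) (h0 : g x ≠ 0) :
    pdv i (fun y => √(g y)) x = pdv i g x / (2 * √(g x)) := by
  simp only [pdv]
  rw [(hg.hasFDerivAt.sqrt h0).fderiv]
  simp
  ring

/-- `∇(δ + |∇u|²)^{1/2} = (D²u ∇u) / (δ + |∇u|²)^{1/2}`. It is used with `δ > 0` in the test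
function and with `δ = 0`, off the critical set, to differentiate `|∇u|` itself. -/
lemma pdv_sqrt_sum {u : EuclideanSpace ℝ (Fin n) → ℝ} (hu : ContDiff ℝ (⊤ : ℕ∞) u) (δ : ℝ)
    {x : EuclideanSpace ℝ (Fin n)} (h0 : δ + ∑ k, pdv k u x ^ 2 ≠ 0) (i : Fin n) :
    pdv i (fun y => √(δ + ∑ k, pdv k u y ^ 2)) x
      = (∑ k, pdv k u x * pdv i (pdv k u) x) / √(δ + ∑ k, pdv k u x ^ 2) := by
  have hd : ∀ k, DifferentiableAt ℝ (pdv k u) x := fun k =>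
    (contDiff_pdv hu k).differentiable (by simp) x
  have hd2 : ∀ k, DifferentiableAt ℝ (fun y => pdv k u y ^ 2) x := fun k => (hd k).pow 2
  have hds : DifferentiableAt ℝ (fun y => ∑ k, pdv k u y ^ 2) x :=
    DifferentiableAt.fun_sum fun k _ => hd2 k
  rw [pdv_sqrt i (hds.const_add δ) h0, pdv_add i (differentiableAt_const δ) hds,
    pdv_sum i fun k _ => hd2 k]
  have h1 : pdv i (fun _ : EuclideanSpace ℝ (Fin n) => δ) x = 0 := by simp [pdv]
  have h2 : ∀ k, pdv i (fun y => pdv k u y ^ 2) x = 2 * (pdv k u x * pdv i (pdv k u) x) := by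
    intro k
    have : (fun y => pdv k u y ^ 2) = fun y => pdv k u y * pdv k u y := by
      funext y; ring
    rw [this, pdv_mul i (hd k) (hd k)]; ring
  rw [h1, zero_add, Finset.sum_congr rfl fun k _ => h2 k, ← Finset.mul_sum,
    mul_div_mul_left _ _ two_ne_zero]

lemma contDiff_sqrt_sum {u : EuclideanSpace ℝ (Fin n) → ℝ} (hu : ContDiff ℝ (⊤ : ℕ∞) u) {δ : ℝ}
    (hδ : 0 < δ) : ContDiff ℝ 1 (fun y => √(δ + ∑ k, pdv k u y ^ 2)) := by
  have h1 : ContDiff ℝ (⊤ : ℕ∞) (fun y => δ + ∑ k, pdv k u y ^ 2) :=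
    contDiff_const.add (ContDiff.sum fun k _ => (contDiff_pdv hu k).pow 2)
  refine (h1.sqrt fun y => ?_).of_le (by exact_mod_cast le_top)
  have : 0 ≤ ∑ k, pdv k u y ^ 2 := Finset.sum_nonneg fun k _ => sq_nonneg _
  positivity

end Pdv

/-! ### Linear algebra of the level sets -/

section Algebra

variable {n : ℕ}

/-- Pythagoras for the projection onto the orthogonal complement of a unit vector. -/
lemma sum_sq_sub_proj {ν : Fin n → ℝ} (hν : ∑ i, ν i ^ 2 = 1) (a : Fin n → ℝ) :
    ∑ i, (a i - (∑ k, ν k * a k) * ν i) ^ 2 = ∑ i, a i ^ 2 - (∑ k, ν k * a k) ^ 2 := by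
  set s := ∑ k, ν k * a k with hs
  have : ∀ i, (a i - s * ν i) ^ 2 = a i ^ 2 - 2 * s * (ν i * a i) + s ^ 2 * ν i ^ 2 := by
    intro i; ring
  simp only [this, Finset.sum_add_distrib, Finset.sum_sub_distrib, ← Finset.mul_sum, hν, ← hs]
  ring

/-- For a symmetric matrix `h`, a unit vector `ν` and `P = 1 - ν νᵀ`,
`|PhP|² = |h|² - |hν|² - |Phν|²`. -/
lemma sum_sq_proj_proj {ν : Fin n → ℝ} (hν : ∑ i, ν i ^ 2 = 1) (h : Fin n → Fin n → ℝ)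
    (hsymm : ∀ i j, h i j = h j i) (m : Fin n → ℝ) (hm : ∀ i, m i = ∑ k, ν k * h k i) :
    ∑ i, ∑ j, ((h j i - m i * ν j) - (∑ k, ν k * (h j k - m k * ν j)) * ν i) ^ 2
      = ∑ i, ∑ j, h i j ^ 2 - ∑ i, m i ^ 2 - ∑ i, (m i - (∑ k, m k * ν k) * ν i) ^ 2 := by
  rw [Finset.sum_comm]
  have h1 : ∀ j, ∑ i, ((h j i - m i * ν j) - (∑ k, ν k * (h j k - m k * ν j)) * ν i) ^ 2
      = ∑ i, (h j i - m i * ν j) ^ 2 - (m j - (∑ k, m k * ν k) * ν j) ^ 2 := by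
    intro j
    rw [sum_sq_sub_proj hν (fun i => h j i - m i * ν j)]
    congr 2
    rw [hm j, Finset.sum_mul, ← Finset.sum_sub_distrib]
    exact Finset.sum_congr rfl fun k _ => by rw [hsymm j k]; ring
  have h2 : ∀ i, ∑ j, (h j i - m i * ν j) ^ 2 = ∑ j, h j i ^ 2 - m i ^ 2 := by
    intro i
    rw [hm i]
    exact sum_sq_sub_proj hν (fun j => h j i)
  rw [Finset.sum_congr rfl fun j _ => h1 j, Finset.sum_sub_distrib, Finset.sum_comm,
    Finset.sum_congr rfl fun j _ => h2 j, Finset.sum_sub_distrib]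
  congr 2
  exact Finset.sum_comm

/-- Where `∇u ≠ 0`: `|∇_T|∇u||² + |A|²|∇u|² = |D²u|² - |D²u ∇u|²/|∇u|²`. -/
lemma geometric_identity {u : EuclideanSpace ℝ (Fin n) → ℝ} (hu : ContDiff ℝ (⊤ : ℕ∞) u)
    {x : EuclideanSpace ℝ (Fin n)} (hx : gradient u x ≠ 0) :
    ‖tangGrad u (fun y => ‖gradient u y‖) x‖ ^ 2 + sffSq u x * ‖gradient u x‖ ^ 2
      = ∑ i, ∑ k, pdv i (pdv k u) x ^ 2
        - (∑ i, (∑ k, pdv k u x * pdv i (pdv k u) x) ^ 2) / ∑ k, pdv k u x ^ 2 := by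
  set r := ‖gradient u x‖ with hr
  have hr0 : 0 < r := norm_pos_iff.mpr hx
  have hrne : r ≠ 0 := hr0.ne'
  have hr2 : ∑ k, pdv k u x ^ 2 = r ^ 2 := (norm_gradient_sq u x).symm
  have hnorm : (fun y => ‖gradient u y‖) = fun y => √(0 + ∑ k, pdv k u y ^ 2) := by
    funext y
    rw [zero_add, ← norm_gradient_sq, Real.sqrt_sq (norm_nonneg _)]
  have hne : 0 + ∑ k, pdv k u x ^ 2 ≠ 0 := by rw [zero_add, hr2]; positivity
  have hsq : √(0 + ∑ k, pdv k u x ^ 2) = r := by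
    rw [zero_add, hr2, Real.sqrt_sq hr0.le]
  obtain ⟨ν, hνdef⟩ : ∃ ν : Fin n → ℝ, ∀ i, ν i = r⁻¹ * pdv i u x := ⟨_, fun _ => rfl⟩
  obtain ⟨m, hmdef⟩ : ∃ m : Fin n → ℝ, ∀ i, m i = ∑ k, ν k * pdv i (pdv k u) x :=
    ⟨_, fun _ => rfl⟩
  have hνc : ∀ i, levelNormal u x i = ν i := by
    intro i
    rw [hνdef, ← gradient_coord]; rfl
  have hν1 : ∑ i, ν i ^ 2 = 1 := by
    simp only [hνdef, mul_pow, ← Finset.mul_sum, hr2]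
    field_simp
  have hWm : ∀ i, ∑ k, pdv k u x * pdv i (pdv k u) x = r * m i := by
    intro i
    rw [hmdef, Finset.mul_sum]
    refine Finset.sum_congr rfl fun k _ => ?_
    rw [hνdef]; field_simp
  have hgn : ∀ i, pdv i (fun y => ‖gradient u y‖) x = m i := by
    intro i
    rw [hnorm, pdv_sqrt_sum hu 0 hne, hsq, hWm]; field_simp
  have hdr : DifferentiableAt ℝ (fun y => ‖gradient u y‖) x := by
    rw [hnorm]
    refine DifferentiableAt.sqrt ?_ hne
    exact (DifferentiableAt.fun_sum fun k _ =>
      ((contDiff_pdv hu k).differentiable (by simp) x).pow 2).const_add 0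
  -- `∂ᵢ ν_j = (∂ᵢⱼu - ν_j ∂ᵢ|∇u|) / |∇u|`
  have hdν : ∀ i j, pdv i (fun y => levelNormal u y j) x
      = (pdv i (pdv j u) x - m i * ν j) / r := by
    intro i j
    have h1 : (fun y => levelNormal u y j) = fun y => (‖gradient u y‖)⁻¹ * pdv j u y := by
      funext y
      rw [← gradient_coord]; rfl
    have h2 : pdv i (fun y => (‖gradient u y‖)⁻¹) x = - (m i) / r ^ 2 := by
      have := ((hasDerivAt_inv hrne).comp_hasFDerivAt x hdr.hasFDerivAt).fderiv
      change fderiv ℝ ((fun z : ℝ => z⁻¹) ∘ fun y => ‖gradient u y‖) x _ = _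
      rw [← hgn i]
      erw [this]
      simp [pdv]
      ring
    rw [h1, pdv_mul i (hdr.fun_inv hrne) ((contDiff_pdv hu j).differentiable (by simp) x), h2,
      hνdef, ← hr]
    field_simp
    ring
  have htan : ‖tangGrad u (fun y => ‖gradient u y‖) x‖ ^ 2
      = ∑ i, (m i - (∑ k, m k * ν k) * ν i) ^ 2 := by
    rw [EuclideanSpace.real_norm_sq_eq]
    refine Finset.sum_congr rfl fun i _ => ?_
    have : ⟪gradient (fun y => ‖gradient u y‖) x, levelNormal u x⟫ = ∑ k, m k * ν k := by
      rw [PiLp.inner_apply]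
      refine Finset.sum_congr rfl fun k _ => ?_
      rw [gradient_coord, hgn, hνc]
      simp [mul_comm]
    simp only [tangGrad, this, PiLp.sub_apply, PiLp.smul_apply, smul_eq_mul, gradient_coord, hgn,
      hνc]
  have hsff : sffSq u x * r ^ 2
      = ∑ i, ∑ j, ((pdv i (pdv j u) x - m i * ν j)
          - (∑ k, ν k * (pdv k (pdv j u) x - m k * ν j)) * ν i) ^ 2 := by
    rw [sffSq, Finset.sum_mul]
    refine Finset.sum_congr rfl fun i _ => ?_
    rw [Finset.sum_mul]
    refine Finset.sum_congr rfl fun j _ => ?_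
    have h3 : ∀ k, fderiv ℝ (fun y => levelNormal u y j) x (EuclideanSpace.single k 1)
        = (pdv k (pdv j u) x - m k * ν j) / r := fun k => hdν k j
    simp only [h3, hνc, ← mul_pow, ← mul_div_assoc, ← Finset.sum_div]
    congr 1
    field_simp
  rw [hsff, htan, sum_sq_proj_proj hν1 (fun j i => pdv i (pdv j u) x)
    (fun i j => by rw [pdv_comm hu]) m hmdef, hr2]
  have h4 : (∑ i, (∑ k, pdv k u x * pdv i (pdv k u) x) ^ 2) / r ^ 2 = ∑ i, m i ^ 2 := by
    simp only [hWm, mul_pow, ← Finset.mul_sum]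
    field_simp
  rw [h4, Finset.sum_comm (f := fun i k => pdv i (pdv k u) x ^ 2)]
  ring

end Algebra

/-! ### The divergence theorem on an arbitrary bounded open set -/

section Divergence

variable {n : ℕ}

lemma integrableOn_of_continuous {Ω : Set (EuclideanSpace ℝ (Fin n))}
    (hΩb : Bornology.IsBounded Ω) {g : EuclideanSpace ℝ (Fin n) → ℝ} (hg : Continuous g) :
    IntegrableOn g Ω :=
  (hg.continuousOn.integrableOn_compact hΩb.isCompact_closure).mono_set subset_closure

/-- Extending `η²` by zero outside `Ω` keeps it differentiable: at a boundary point `η²` vanishes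
to second order, so no regularity of `∂Ω` is needed. -/
lemma hasFDerivAt_indicator_sq {Ω : Set (EuclideanSpace ℝ (Fin n))} (hΩo : IsOpen Ω)
    {η : EuclideanSpace ℝ (Fin n) → ℝ} (hη : ContDiff ℝ 1 η) (hη0 : ∀ x ∈ frontier Ω, η x = 0)
    (x : EuclideanSpace ℝ (Fin n)) :
    HasFDerivAt (Ω.indicator fun y => η y ^ 2)
      (Ω.indicator (fun y => (2 * η y) • fderiv ℝ η y) x) x := by
  have hd : HasFDerivAt η (fderiv ℝ η x) x := (hη.differentiable (by simp) x).hasFDerivAt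
  by_cases hx : x ∈ Ω
  · rw [Set.indicator_of_mem hx]
    have h1 : HasFDerivAt (fun y => η y ^ 2) ((2 * η x) • fderiv ℝ η x) x := by
      simpa using hd.pow 2
    refine h1.congr_of_eventuallyEq ?_
    filter_upwards [hΩo.mem_nhds hx] with y hy
    exact Set.indicator_of_mem hy _
  · rw [Set.indicator_of_notMem hx]
    by_cases hc : x ∈ closure Ω
    · have h0 : η x = 0 := hη0 x ⟨hc, by rwa [hΩo.interior_eq]⟩
      have hO : (fun y => η y) =O[nhds x] fun y => y - x := by
        simpa [h0] using hd.isBigO_sub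
      have ho : (fun y => y - x) =o[nhds x] fun _ => (1 : ℝ) := by
        rw [Asymptotics.isLittleO_one_iff]
        exact (continuous_id.sub continuous_const).tendsto' _ _ (by simp)
      rw [hasFDerivAt_iff_isLittleO]
      have hprod : (fun y => η y ^ 2) =o[nhds x] fun y => y - x := by
        have h2 := (hO.trans_isLittleO ho).mul_isBigO hO.norm_right
        refine Asymptotics.IsLittleO.of_norm_right ?_
        simpa [sq] using h2
      refine Asymptotics.IsBigO.trans_isLittleO ?_ hprod
      refine Asymptotics.IsBigO.of_norm_le fun y => ?_
      rw [Set.indicator_of_notMem hx]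
      by_cases hy : y ∈ Ω <;> simp [hy]
      positivity
    · refine (hasFDerivAt_const (0 : ℝ) x).congr_of_eventuallyEq ?_
      filter_upwards [isClosed_closure.isOpen_compl.mem_nhds hc] with y hy
      exact Set.indicator_of_notMem (fun h => hy (subset_closure h)) _

/-- `∫_Ω ∂ᵢ(η² w) = 0` when `η` vanishes on `∂Ω`, for any bounded open `Ω`. -/
lemma integral_pdv_eq_zero {Ω : Set (EuclideanSpace ℝ (Fin n))} (hΩo : IsOpen Ω)
    (hΩb : Bornology.IsBounded Ω) {η : EuclideanSpace ℝ (Fin n) → ℝ} (hη : ContDiff ℝ 1 η)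
    (hη0 : ∀ x ∈ frontier Ω, η x = 0) {w : EuclideanSpace ℝ (Fin n) → ℝ} (hw : ContDiff ℝ 1 w)
    (i : Fin n) :
    ∫ x in Ω, (2 * η x * pdv i η x * w x + η x ^ 2 * pdv i w x) = 0 := by
  have hm := hΩo.measurableSet
  have hcη := hη.continuous
  have hcη' := continuous_pdv hη i
  have hcw := hw.continuous
  have hcw' := continuous_pdv hw i
  have c1 : Continuous fun x => 2 * η x * pdv i η x * w x := by fun_prop
  have c2 : Continuous fun x => η x ^ 2 * pdv i w x := by fun_prop
  have c3 : Continuous fun x => η x ^ 2 * w x := by fun_prop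
  have e1 : (fun x => ContinuousLinearMap.mul ℝ ℝ
      ((Ω.indicator (fun y => (2 * η y) • fderiv ℝ η y) x) (EuclideanSpace.single i 1)) (w x))
      = Ω.indicator fun x => 2 * η x * pdv i η x * w x := by
    funext x
    by_cases hx : x ∈ Ω <;> simp [hx, pdv]
  have e2 : (fun x => ContinuousLinearMap.mul ℝ ℝ
      (Ω.indicator (fun y => η y ^ 2) x) (fderiv ℝ w x (EuclideanSpace.single i 1)))
      = Ω.indicator fun x => η x ^ 2 * pdv i w x := by
    funext x
    by_cases hx : x ∈ Ω <;> simp [hx, pdv]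
  have e3 : (fun x => ContinuousLinearMap.mul ℝ ℝ (Ω.indicator (fun y => η y ^ 2) x) (w x))
      = Ω.indicator fun x => η x ^ 2 * w x := by
    funext x
    by_cases hx : x ∈ Ω <;> simp [hx]
  have key := integral_bilinear_hasFDerivAt_right_eq_neg_left_of_integrable
    (μ := (volume : Measure (EuclideanSpace ℝ (Fin n))))
    (f := Ω.indicator fun y => η y ^ 2)
    (f' := Ω.indicator (fun y => (2 * η y) • fderiv ℝ η y)) (g := w) (g' := fderiv ℝ w)
    (v := EuclideanSpace.single i 1) (B := ContinuousLinearMap.mul ℝ ℝ)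
    (by rw [e1]; exact (integrableOn_of_continuous hΩb c1).integrable_indicator hm)
    (by rw [e2]; exact (integrableOn_of_continuous hΩb c2).integrable_indicator hm)
    (by rw [e3]; exact (integrableOn_of_continuous hΩb c3).integrable_indicator hm)
    (fun x _ => hasFDerivAt_indicator_sq hΩo hη hη0 x)
    (fun x _ => (hw.differentiable (by simp) x).hasFDerivAt)
  rw [e1, e2, integral_indicator hm, integral_indicator hm] at key
  rw [integral_add (integrableOn_of_continuous hΩb c1) (integrableOn_of_continuous hΩb c2), key]
  ring

end Divergence

/-! ### The linearized equation and the regularized inequality -/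

section Stability

variable {n : ℕ}

/-- The linearized equation, obtained by differentiating `-Δu = f(u)`:
`-Δ∂ₖu = f'(u) ∂ₖu` in `Ω`. -/
lemma linearized {Ω : Set (EuclideanSpace ℝ (Fin n))} (hΩo : IsOpen Ω)
    {f : ℝ → ℝ} (hf : ContDiff ℝ 1 f)
    {u : EuclideanSpace ℝ (Fin n) → ℝ} (hu : ContDiff ℝ (⊤ : ℕ∞) u)
    (hsol : ∀ x ∈ Ω, -(lap u x) = f (u x)) {x : EuclideanSpace ℝ (Fin n)} (hx : x ∈ Ω)
    (k : Fin n) :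
    ∑ i, pdv i (pdv i (pdv k u)) x = - (deriv f (u x) * pdv k u x) := by
  have h1 : pdv k (lap u) x = ∑ i, pdv i (pdv i (pdv k u)) x := by
    have : lap u = fun y => ∑ i, pdv i (pdv i u) y := rfl
    rw [this, pdv_sum k fun i _ =>
      (contDiff_pdv (contDiff_pdv hu i) i).differentiable (by simp) x]
    refine Finset.sum_congr rfl fun i _ => ?_
    rw [pdv_comm (contDiff_pdv hu i) k i, pdv_comm hu k i]
  have h2 : lap u =ᶠ[nhds x] fun y => - f (u y) := by
    filter_upwards [hΩo.mem_nhds hx] with y hy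
    rw [← hsol y hy, neg_neg]
  have hfd : HasDerivAt f (deriv f (u x)) (u x) :=
    (hf.differentiable (by simp) (u x)).hasDerivAt
  have hud : HasFDerivAt u (fderiv ℝ u x) x := (hu.differentiable (by simp) x).hasFDerivAt
  have h3 : fderiv ℝ (fun y => - f (u y)) x = - (deriv f (u x) • fderiv ℝ u x) :=
    ((hfd.comp_hasFDerivAt x hud).fun_neg).fderiv
  rw [← h1]
  simp only [pdv]
  rw [h2.fderiv_eq, h3]
  simp

/-- The Bochner identity for a solution: `div(D²u ∇u) = |D²u|² - f'(u)|∇u|²` in `Ω`. -/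
lemma divergence_hess_grad {Ω : Set (EuclideanSpace ℝ (Fin n))} (hΩo : IsOpen Ω)
    {f : ℝ → ℝ} (hf : ContDiff ℝ 1 f)
    {u : EuclideanSpace ℝ (Fin n) → ℝ} (hu : ContDiff ℝ (⊤ : ℕ∞) u)
    (hsol : ∀ x ∈ Ω, -(lap u x) = f (u x)) {x : EuclideanSpace ℝ (Fin n)} (hx : x ∈ Ω) :
    ∑ i, pdv i (fun y => ∑ k, pdv k u y * pdv i (pdv k u) y) x
      = ∑ i, ∑ k, pdv i (pdv k u) x ^ 2 - deriv f (u x) * ∑ k, pdv k u x ^ 2 := by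
  have hd : ∀ k, DifferentiableAt ℝ (pdv k u) x := fun k =>
    (contDiff_pdv hu k).differentiable (by simp) x
  have hd2 : ∀ i k, DifferentiableAt ℝ (pdv i (pdv k u)) x := fun i k =>
    (contDiff_pdv (contDiff_pdv hu k) i).differentiable (by simp) x
  have h1 : ∀ i, pdv i (fun y => ∑ k, pdv k u y * pdv i (pdv k u) y) x
      = ∑ k, pdv k u x * pdv i (pdv i (pdv k u)) x + ∑ k, pdv i (pdv k u) x ^ 2 := by
    intro i
    rw [pdv_sum i fun k _ => (hd k).fun_mul (hd2 i k), ← Finset.sum_add_distrib]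
    refine Finset.sum_congr rfl fun k _ => ?_
    rw [pdv_mul i (hd k) (hd2 i k)]; ring
  have h2 : ∑ i, ∑ k, pdv k u x * pdv i (pdv i (pdv k u)) x
      = - (deriv f (u x) * ∑ k, pdv k u x ^ 2) := by
    rw [Finset.sum_comm, Finset.mul_sum, ← Finset.sum_neg_distrib]
    refine Finset.sum_congr rfl fun k _ => ?_
    rw [← Finset.mul_sum, linearized hΩo hf hu hsol hx]; ring
  rw [Finset.sum_congr rfl fun i _ => h1 i, Finset.sum_add_distrib, h2]
  ring

/-- Stability tested with `ξ = φη`, `φ = (δ + |∇u|²)^{1/2}`. As `φ∇φ = D²u ∇u`, the cross term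
`2η ∇η · D²u ∇u` of `|∇ξ|²` is removed by the divergence theorem for `η² D²u ∇u`. -/
lemma regularized_inequality {Ω : Set (EuclideanSpace ℝ (Fin n))} (hΩo : IsOpen Ω)
    (hΩb : Bornology.IsBounded Ω)
    {f : ℝ → ℝ} (hf : ContDiff ℝ 1 f)
    {u : EuclideanSpace ℝ (Fin n) → ℝ} (hu : ContDiff ℝ (⊤ : ℕ∞) u)
    (hsol : ∀ x ∈ Ω, -(lap u x) = f (u x))
    (hstable : ∀ ξ : EuclideanSpace ℝ (Fin n) → ℝ, ContDiff ℝ 1 ξ →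
      (∀ x ∈ frontier Ω, ξ x = 0) →
      ∫ x in Ω, deriv f (u x) * ξ x ^ 2 ≤ ∫ x in Ω, ‖gradient ξ x‖ ^ 2)
    {η : EuclideanSpace ℝ (Fin n) → ℝ} (hη : ContDiff ℝ 1 η)
    (hη0 : ∀ x ∈ frontier Ω, η x = 0) {δ : ℝ} (hδ : 0 < δ) :
    (∫ x in Ω, (∑ i, ∑ k, pdv i (pdv k u) x ^ 2
        - (∑ i, (∑ k, pdv k u x * pdv i (pdv k u) x) ^ 2) / (δ + ∑ k, pdv k u x ^ 2)) * η x ^ 2)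
      + δ * ∫ x in Ω, deriv f (u x) * η x ^ 2
      ≤ (∫ x in Ω, ‖gradient u x‖ ^ 2 * ‖gradient η x‖ ^ 2)
        + δ * ∫ x in Ω, ‖gradient η x‖ ^ 2 := by
  obtain ⟨W, hW⟩ : ∃ W : Fin n → EuclideanSpace ℝ (Fin n) → ℝ,
      W = fun i y => ∑ k, pdv k u y * pdv i (pdv k u) y := ⟨_, rfl⟩
  obtain ⟨G, hG⟩ : ∃ G : EuclideanSpace ℝ (Fin n) → ℝ, G = fun y => ∑ k, pdv k u y ^ 2 :=
    ⟨_, rfl⟩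
  have hWs : ∀ i, ContDiff ℝ 1 (W i) := by
    intro i
    have : ContDiff ℝ (⊤ : ℕ∞) (W i) := by
      rw [hW]
      exact ContDiff.sum fun k _ =>
        (contDiff_pdv hu k).mul (contDiff_pdv (contDiff_pdv hu k) i)
    exact this.of_le (by exact_mod_cast le_top)
  have hG0 : ∀ x, 0 ≤ G x := fun x => by
    rw [hG]; exact Finset.sum_nonneg fun k _ => sq_nonneg _
  have hpos : ∀ x, 0 < δ + G x := fun x => by have := hG0 x; positivity
  have hφ := contDiff_sqrt_sum hu hδ
  obtain ⟨φ, hφd⟩ : ∃ φ : EuclideanSpace ℝ (Fin n) → ℝ, φ = fun y => √(δ + G y) := ⟨_, rfl⟩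
  have hφc : ContDiff ℝ 1 φ := by rw [hφd, hG]; exact hφ
  have hφ2 : ∀ x, φ x ^ 2 = δ + G x := fun x => by rw [hφd]; exact Real.sq_sqrt (hpos x).le
  have hφ0 : ∀ x, φ x ≠ 0 := fun x h => by
    have := hφ2 x; rw [h] at this; have := hpos x; simp_all
  have hDφ : ∀ i x, pdv i φ x = W i x / φ x := by
    intro i x
    have := pdv_sqrt_sum hu δ (x := x) (by have := hpos x; rw [hG] at this; exact this.ne') i
    rw [hφd, hG, hW]; exact this
  have hst := hstable (fun y => φ y * η y) (hφc.mul hη) (fun x hx => by simp [hη0 x hx])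
  -- expand `|∇(φη)|²`
  have hgrad : ∀ x, ‖gradient (fun y => φ y * η y) x‖ ^ 2
      = (δ + G x) * ‖gradient η x‖ ^ 2 + ∑ i, 2 * η x * pdv i η x * W i x
        + (∑ i, W i x ^ 2) / (δ + G x) * η x ^ 2 := by
    intro x
    have h1 : ∀ i, pdv i (fun y => φ y * η y) x ^ 2
        = (δ + G x) * pdv i η x ^ 2 + 2 * η x * pdv i η x * W i x
          + W i x ^ 2 / (δ + G x) * η x ^ 2 := by
      intro i
      rw [pdv_mul i (hφc.differentiable (by simp) x) (hη.differentiable (by simp) x), hDφ, ← hφ2]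
      have := hφ0 x
      field_simp
      ring
    rw [norm_gradient_sq, norm_gradient_sq, Finset.sum_congr rfl fun i _ => h1 i,
      Finset.sum_add_distrib, Finset.sum_add_distrib, Finset.mul_sum, Finset.sum_div,
      Finset.sum_mul]
  -- the divergence theorem for `η² D²u ∇u`
  have cη := hη.continuous
  have cη' := fun i => continuous_pdv hη i
  have cW := fun i => (hWs i).continuous
  have cW' := fun i => continuous_pdv (hWs i) i
  have cu := fun k => (contDiff_pdv hu k).continuous
  have cu2 := fun i k => (contDiff_pdv (contDiff_pdv hu k) i).continuous
  have cu0 := hu.continuous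
  have cf : Continuous fun x => deriv f (u x) := (hf.continuous_deriv le_rfl).comp cu0
  have cG : Continuous G := by rw [hG]; fun_prop
  have cinv : Continuous fun x => (∑ i, W i x ^ 2) / (δ + G x) :=
    Continuous.div (by fun_prop) (by fun_prop) fun x => (hpos x).ne'
  have cgη : Continuous fun x => ‖gradient η x‖ ^ 2 := by
    simp only [norm_gradient_sq]; fun_prop
  have hdiv : ∫ x in Ω, (∑ i, 2 * η x * pdv i η x * W i x
      + (∑ i, ∑ k, pdv i (pdv k u) x ^ 2 - deriv f (u x) * G x) * η x ^ 2) = 0 := by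
    have h1 : ∫ x in Ω, ∑ i, (2 * η x * pdv i η x * W i x + η x ^ 2 * pdv i (W i) x) = 0 := by
      rw [integral_finsetSum _ fun i _ => integrableOn_of_continuous hΩb
        (by have := cη' i; have := cW i; have := cW' i; fun_prop)]
      exact Finset.sum_eq_zero fun i _ => integral_pdv_eq_zero hΩo hΩb hη hη0 (hWs i) i
    rw [← h1]
    refine setIntegral_congr_fun hΩo.measurableSet fun x hx => ?_
    have h2 := divergence_hess_grad hΩo hf hu hsol hx
    simp only [Finset.sum_add_distrib, ← Finset.mul_sum]
    rw [hW, hG, ← h2]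
    ring
  have i1 := integrableOn_of_continuous hΩb
    (g := fun x => deriv f (u x) * (φ x * η x) ^ 2) (by have := hφc.continuous; fun_prop)
  have i2 := integrableOn_of_continuous hΩb (g := fun x => (δ + G x) * ‖gradient η x‖ ^ 2
    + ∑ i, 2 * η x * pdv i η x * W i x + (∑ i, W i x ^ 2) / (δ + G x) * η x ^ 2) (by fun_prop)
  have i3 := integrableOn_of_continuous hΩb (g := fun x => ∑ i, 2 * η x * pdv i η x * W i x
      + (∑ i, ∑ k, pdv i (pdv k u) x ^ 2 - deriv f (u x) * G x) * η x ^ 2) (by fun_prop)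
  have i4 := integrableOn_of_continuous hΩb (g := fun x => (∑ i, ∑ k, pdv i (pdv k u) x ^ 2
        - (∑ i, W i x ^ 2) / (δ + G x)) * η x ^ 2) (by fun_prop)
  have i5 := integrableOn_of_continuous hΩb (g := fun x => deriv f (u x) * η x ^ 2) (by fun_prop)
  have i6 := integrableOn_of_continuous hΩb (g := fun x => G x * ‖gradient η x‖ ^ 2)
    (by fun_prop)
  have i7 := integrableOn_of_continuous hΩb (g := fun x => ‖gradient η x‖ ^ 2) (by fun_prop)
  rw [integral_congr_ae (ae_of_all _ hgrad)] at hst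
  have hlin : (∫ x in Ω, ((δ + G x) * ‖gradient η x‖ ^ 2
      + ∑ i, 2 * η x * pdv i η x * W i x + (∑ i, W i x ^ 2) / (δ + G x) * η x ^ 2))
      - (∫ x in Ω, deriv f (u x) * (φ x * η x) ^ 2)
      - (∫ x in Ω, (∑ i, 2 * η x * pdv i η x * W i x
        + (∑ i, ∑ k, pdv i (pdv k u) x ^ 2 - deriv f (u x) * G x) * η x ^ 2))
      = ((∫ x in Ω, G x * ‖gradient η x‖ ^ 2) + δ * ∫ x in Ω, ‖gradient η x‖ ^ 2)
        - ((∫ x in Ω, (∑ i, ∑ k, pdv i (pdv k u) x ^ 2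
          - (∑ i, W i x ^ 2) / (δ + G x)) * η x ^ 2)
        + δ * ∫ x in Ω, deriv f (u x) * η x ^ 2) := by
    have e1 := integral_sub (i2.sub i1) i3
    have e2 := integral_sub (i6.add (i7.const_mul δ)) (i4.add (i5.const_mul δ))
    simp only [Pi.sub_apply, Pi.add_apply] at e1 e2
    rw [← integral_const_mul, ← integral_const_mul, ← integral_sub i2 i1, ← e1,
      ← integral_add i6 (i7.const_mul δ), ← integral_add i4 (i5.const_mul δ), ← e2]
    refine integral_congr_ae (ae_of_all _ fun x => ?_)
    simp only [mul_pow, hφ2]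
    ring
  have hfin : (∫ x in Ω, (∑ i, ∑ k, pdv i (pdv k u) x ^ 2
      - (∑ i, W i x ^ 2) / (δ + G x)) * η x ^ 2) + δ * ∫ x in Ω, deriv f (u x) * η x ^ 2
      ≤ (∫ x in Ω, G x * ‖gradient η x‖ ^ 2) + δ * ∫ x in Ω, ‖gradient η x‖ ^ 2 := by
    rw [hdiv] at hlin
    linarith
  simp only [norm_gradient_sq u]
  subst hW hG
  exact hfin

end Stability

/-- Sternberg–Zumbrun geometric stability inequality: for a smooth stable
solution `u` of `−Δu = f(u)` in a bounded domain `Ω` and any `C¹` function `η`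
vanishing on `∂Ω`,
`∫_{Ω∩{|∇u|>0}} (|∇_T|∇u||² + |A|²|∇u|²) η² ≤ ∫_Ω |∇u|²|∇η|²`. -/
theorem sternberg_zumbrun (n : ℕ)
    (Ω : Set (EuclideanSpace ℝ (Fin n))) (hΩo : IsOpen Ω)
    (hΩb : Bornology.IsBounded Ω)
    (f : ℝ → ℝ) (hf : ContDiff ℝ 1 f)
    (u : EuclideanSpace ℝ (Fin n) → ℝ) (hu : ContDiff ℝ (⊤ : ℕ∞) u)
    (hsol : ∀ x ∈ Ω, -(lap u x) = f (u x))
    (hstable : ∀ ξ : EuclideanSpace ℝ (Fin n) → ℝ, ContDiff ℝ 1 ξ →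
      (∀ x ∈ frontier Ω, ξ x = 0) →
      ∫ x in Ω, deriv f (u x) * ξ x ^ 2 ≤ ∫ x in Ω, ‖gradient ξ x‖ ^ 2) :
    ∀ η : EuclideanSpace ℝ (Fin n) → ℝ, ContDiff ℝ 1 η →
      (∀ x ∈ frontier Ω, η x = 0) →
      ∫ x in {x ∈ Ω | gradient u x ≠ 0},
          (‖tangGrad u (fun y => ‖gradient u y‖) x‖ ^ 2
            + sffSq u x * ‖gradient u x‖ ^ 2) * η x ^ 2
        ≤ ∫ x in Ω, ‖gradient u x‖ ^ 2 * ‖gradient η x‖ ^ 2 := by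
  intro η hη hη0
  set R := ∫ x in Ω, ‖gradient u x‖ ^ 2 * ‖gradient η x‖ ^ 2 with hR
  set C := ∫ x in Ω, deriv f (u x) * η x ^ 2 with hC
  set C' := ∫ x in Ω, ‖gradient η x‖ ^ 2 with hC'
  set S := {x ∈ Ω | gradient u x ≠ 0} with hS
  set L := ∫ x in S, (‖tangGrad u (fun y => ‖gradient u y‖) x‖ ^ 2
            + sffSq u x * ‖gradient u x‖ ^ 2) * η x ^ 2 with hL
  have hR0 : 0 ≤ R := integral_nonneg fun x => by positivity
  have cη := hη.continuous
  have cu := fun k => (contDiff_pdv hu k).continuous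
  have cu2 := fun i k => (contDiff_pdv (contDiff_pdv hu k) i).continuous
  have hScoord : ∀ x, gradient u x ≠ 0 ↔ ∑ k, pdv k u x ^ 2 ≠ 0 := fun x => by
    rw [← norm_gradient_sq]; simp
  have hSm : MeasurableSet S := by
    have hO : IsOpen {x | gradient u x ≠ 0} := by
      have hset : {x | gradient u x ≠ 0} = {x | ∑ k, pdv k u x ^ 2 ≠ 0} := Set.ext hScoord
      rw [hset]
      exact isOpen_ne_fun (by fun_prop) continuous_const
    exact hΩo.measurableSet.inter hO.measurableSet
  by_cases hint : IntegrableOn (fun x => (‖tangGrad u (fun y => ‖gradient u y‖) x‖ ^ 2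
      + sffSq u x * ‖gradient u x‖ ^ 2) * η x ^ 2) S
  swap
  -- a non-integrable left-hand side has integral `0`
  · rw [hL, integral_undef hint]; exact hR0
  have hdelta : ∀ δ : ℝ, 0 < δ → L + δ * C ≤ R + δ * C' := by
    intro δ hδ
    have hpos : ∀ x, 0 < δ + ∑ k, pdv k u x ^ 2 := fun x => by positivity
    have hreg := regularized_inequality hΩo hΩb hf hu hsol hstable hη hη0 hδ
    refine le_trans (add_le_add_left ?_ _) hreg
    have hcont : Continuous fun x => (∑ i, ∑ k, pdv i (pdv k u) x ^ 2
        - (∑ i, (∑ k, pdv k u x * pdv i (pdv k u) x) ^ 2) / (δ + ∑ k, pdv k u x ^ 2))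
        * η x ^ 2 := by
      refine Continuous.mul (Continuous.sub (by fun_prop) ?_) (by fun_prop)
      exact Continuous.div (by fun_prop) (by fun_prop) fun x => (hpos x).ne'
    have hi := integrableOn_of_continuous hΩb hcont
    have hsub : S ⊆ Ω := fun x hx => hx.1
    refine le_trans (setIntegral_mono_on hint (hi.mono_set hsub) hSm fun x hx => ?_)
      (setIntegral_mono_set hi (ae_of_all _ fun x => ?_) hsub.eventuallyLE)
    · rw [geometric_identity hu hx.2]
      have hG : 0 < ∑ k, pdv k u x ^ 2 :=
        lt_of_le_of_ne (by positivity) ((hScoord x).1 hx.2).symm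
      gcongr
      linarith
    · refine mul_nonneg (sub_nonneg.2 ?_) (sq_nonneg _)
      -- Cauchy–Schwarz: `|D²u ∇u|² ≤ |D²u|² |∇u|²`
      rw [div_le_iff₀ (hpos x), Finset.sum_mul]
      refine Finset.sum_le_sum fun i _ => ?_
      refine (Finset.sum_mul_sq_le_sq_mul_sq _ _ _).trans ?_
      rw [mul_comm]
      gcongr
      linarith
  -- the inequality holds for all `δ > 0` with fixed constants, so `δ → 0` gives `L ≤ R`
  refine le_of_forall_pos_le_add fun ε hε => ?_
  have hA : 0 < |C' - C| + 1 := by positivity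
  have h1 := hdelta (ε / (|C' - C| + 1)) (by positivity)
  have h2 : ε / (|C' - C| + 1) * (C' - C) ≤ ε := by
    rw [div_mul_eq_mul_div, div_le_iff₀ hA]
    nlinarith [le_abs_self (C' - C)]
  linarith
end
end
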